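/- arXiv:2412.01951 — 9 statements merged into one kernel-verified Lean document; each statement's English description precedes it below -/
import Mathlib

section
/- Let V be a finite vocabulary, H ≥ 1, and let π be an autoregressive model over Y = V^H, i.e. π(y_{1:H}) = ∏_{h=1}^H π_h(y_h | y_{1:h-1}) where each π_h(·|y_{1:h-1}) is a probability distribution on V. If y* ∈ V^H is the unique maximizer of y ↦ π(y) over V^H and π(y*) > 1/2, then any greedy decoding sequence ŷ, defined by choosing ŷ_h ∈ argmax_{v∈V} π_h(v | ŷ_1,…,ŷ_{h-1}) for h = 1,…,H, satisfies ŷ = y*. Moreover, this is tight: there exist a finite vocabulary V, a horizon H, and an autoregressive model π with a unique maximizer y* satisfying π(y*) ≤ 1/2 for which the greedy decoding sequence differs from y*. -/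
open Finset

/-- Sequence-level probability of an autoregressive model with conditionals `cond`. -/
noncomputable def seqProb {V : Type} (H : ℕ) (cond : List V → V → ℝ) (y : Fin H → V) : ℝ :=
  ∏ h : Fin H, cond ((List.ofFn y).take (h : ℕ)) (y h)

/-- `yhat` is a greedy decoding sequence for the autoregressive model `cond`. -/
def IsGreedy {V : Type} (H : ℕ) (cond : List V → V → ℝ) (yhat : Fin H → V) : Prop :=
  ∀ h : Fin H, ∀ v : V,
    cond ((List.ofFn yhat).take (h : ℕ)) v ≤ cond ((List.ofFn yhat).take (h : ℕ)) (yhat h)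

/-!
A conditional along `y` is at least the probability of the whole sequence `y`, since the remaining
factors are at most one. If `y` has probability above `1 / 2`, each of its tokens therefore holds a
strict majority given the preceding ones, and no other token can match it, so greedy decoding never
leaves `y`. For tightness, a first token of probability `1 - p ≥ p` attracts greedy decoding, but
splitting its mass evenly leaves each of its continuations only `(1 - p) / 2`, which is less than
`p` as soon as `p > 1 / 3`.
-/

/-- The conditionals `cond`, at every prefix shorter than the horizon `H`, are nonnegative weights
of total mass at most one. The mass is bounded through finite partial sums, so that `V` may be
infinite without a summability hypothesis. -/
structure IsSubstochastic {V : Type} (H : ℕ) (cond : List V → V → ℝ) : Prop where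
  nonneg : ∀ l : List V, l.length < H → ∀ v, 0 ≤ cond l v
  sum_le_one : ∀ l : List V, l.length < H → ∀ s : Finset V, ∑ v ∈ s, cond l v ≤ 1

lemma take_ofFn_congr {α : Type*} {H n : ℕ} {f g : Fin H → α}
    (hfg : ∀ i : Fin H, (i : ℕ) < n → f i = g i) :
    (List.ofFn f).take n = (List.ofFn g).take n := by
  refine List.ext_getElem (by simp) fun i hi _ => ?_
  simp only [List.length_take, List.length_ofFn, lt_min_iff] at hi
  simpa using hfg ⟨i, hi.2⟩ hi.1

lemma eq_of_half_lt_of_le {ι 𝕜 : Type*} [Field 𝕜] [LinearOrder 𝕜] [IsStrictOrderedRing 𝕜]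
    {w : ι → 𝕜} (hw : ∀ s : Finset ι, ∑ i ∈ s, w i ≤ 1) {i j : ι} (hi : 1 / 2 < w i)
    (hij : w i ≤ w j) : j = i := by
  classical
  by_contra hne
  have hpair : w j + w i ≤ 1 := by simpa only [sum_pair hne] using hw {j, i}
  linarith

namespace IsSubstochastic

variable {V : Type} {H : ℕ} {cond : List V → V → ℝ}

lemma of_sum_eq_one [Fintype V] (hnonneg : ∀ l : List V, l.length < H → ∀ v, 0 ≤ cond l v)
    (hsum : ∀ l : List V, l.length < H → ∑ v, cond l v = 1) : IsSubstochastic H cond where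
  nonneg := hnonneg
  sum_le_one l hl _ := (sum_le_univ_sum_of_nonneg (hnonneg l hl)).trans_eq (hsum l hl)

lemma le_one (hcond : IsSubstochastic H cond) {l : List V} (hl : l.length < H) (v : V) :
    cond l v ≤ 1 := by
  simpa only [sum_singleton] using hcond.sum_le_one l hl {v}

lemma seqProb_le_cond (hcond : IsSubstochastic H cond) (y : Fin H → V) (h : Fin H) :
    seqProb H cond y ≤ cond ((List.ofFn y).take h) (y h) := by
  have hlen (k : Fin H) : ((List.ofFn y).take k).length < H := by simp
  have hnonneg (k : Fin H) : 0 ≤ cond ((List.ofFn y).take k) (y k) := hcond.nonneg _ (hlen k) _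
  rw [seqProb, ← mul_prod_erase _ _ (mem_univ h)]
  exact mul_le_of_le_one_right (hnonneg h)
    (prod_le_one (fun k _ => hnonneg k) fun k _ => hcond.le_one (hlen k) _)

end IsSubstochastic

lemma IsGreedy.eq_of_half_lt_seqProb {V : Type} {H : ℕ} {cond : List V → V → ℝ}
    {y yhat : Fin H → V} (hgreedy : IsGreedy H cond yhat) (hcond : IsSubstochastic H cond)
    (hy : 1 / 2 < seqProb H cond y) : yhat = y := by
  funext h
  induction h using WellFoundedLT.induction with
  | _ h ih =>
    have hprefix : (List.ofFn yhat).take h = (List.ofFn y).take h := take_ofFn_congr ih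
    have hmajority : 1 / 2 < cond ((List.ofFn y).take h) (y h) :=
      hy.trans_le (hcond.seqProb_le_cond y h)
    have hmax : cond ((List.ofFn y).take h) (y h) ≤ cond ((List.ofFn y).take h) (yhat h) := by
      simpa only [hprefix] using hgreedy h (y h)
    exact eq_of_half_lt_of_le (hcond.sum_le_one _ (by simp)) hmajority hmax

/-- The conditionals of a two-token model that misleads greedy decoding: the first token is `0` with
probability `p` and `1` otherwise; token `0` is then followed by `0` surely, whereas the mass of
token `1` is split evenly over its two continuations. -/
noncomputable def decoyCond (p : ℝ) : List (Fin 2) → Fin 2 → ℝ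
  | [] => ![p, 1 - p]
  | a :: _ => ![![1, 0], ![1 / 2, 1 / 2]] a

section Decoy

variable (p : ℝ)

lemma sum_decoyCond (l : List (Fin 2)) : ∑ v, decoyCond p l v = 1 := by
  rcases l with _ | ⟨a, l⟩
  · simp [decoyCond]
  · fin_cases a <;> norm_num [decoyCond]

lemma seqProb_decoyCond (y : Fin 2 → Fin 2) :
    seqProb 2 (decoyCond p) y = decoyCond p [] (y 0) * decoyCond p [y 0] (y 1) := by
  simp [seqProb, Fin.prod_univ_two, List.ofFn_succ]

lemma seqProb_decoyCond_zero : seqProb 2 (decoyCond p) ![0, 0] = p := by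
  simp [seqProb_decoyCond, decoyCond]

variable {p}

lemma decoyCond_nonneg (hp₀ : 0 ≤ p) (hp₁ : p ≤ 1) (l : List (Fin 2)) (v : Fin 2) :
    0 ≤ decoyCond p l v := by
  rcases l with _ | ⟨a, l⟩
  · fin_cases v <;> simp [decoyCond, hp₀, hp₁]
  · fin_cases a <;> fin_cases v <;> simp [decoyCond]

lemma seqProb_decoyCond_lt (hp : 1 / 3 < p) {y : Fin 2 → Fin 2} (hy : y ≠ ![0, 0]) :
    seqProb 2 (decoyCond p) y < p := by
  have hcases : (y 0 = 0 ∧ y 1 = 1) ∨ y 0 = 1 := by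
    by_contra! hne
    have h₀ : y 0 = 0 := by lia
    have h₁ : y 1 = 0 := by lia
    exact hy (funext (Fin.forall_fin_two.2 ⟨h₀, h₁⟩))
  rw [seqProb_decoyCond]
  rcases hcases with ⟨h₀, h₁⟩ | h₀
  · have hpos : 0 < p := by linarith
    simpa [decoyCond, h₀, h₁] using hpos
  · have hsplit : decoyCond p [1] (y 1) = 1 / 2 := by
      generalize y 1 = v
      fin_cases v <;> simp [decoyCond]
    have hfirst : decoyCond p [] 1 = 1 - p := by simp [decoyCond]
    rw [h₀, hsplit, hfirst]
    linarith

lemma isGreedy_decoyCond (hp : p ≤ 1 / 2) : IsGreedy 2 (decoyCond p) ![1, 0] := by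
  have hfirst : p ≤ 1 - p := by linarith
  intro h v
  fin_cases h <;> fin_cases v <;> simp [decoyCond, hfirst]

end Decoy

theorem greedy_decoding_succeeds_for_sharpened_models_and_tightness_general :
    (∀ (V : Type) (H : ℕ) (cond : List V → V → ℝ), IsSubstochastic H cond →
      ∀ ystar : Fin H → V, 1 / 2 < seqProb H cond ystar →
        ∀ yhat : Fin H → V, IsGreedy H cond yhat → yhat = ystar)
    ∧
    (∀ p : ℝ, 1 / 3 < p → p ≤ 1 / 2 → ∃ cond : List (Fin 2) → Fin 2 → ℝ,
      (∀ l v, 0 ≤ cond l v) ∧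
      (∀ l, ∑ v, cond l v = 1) ∧
      ∃ ystar yhat : Fin 2 → Fin 2,
        (∀ y, y ≠ ystar → seqProb 2 cond y < seqProb 2 cond ystar) ∧
        seqProb 2 cond ystar = p ∧
        IsGreedy 2 cond yhat ∧ yhat ≠ ystar) := by
  refine ⟨fun V H cond hcond ystar hhalf yhat hgreedy =>
    hgreedy.eq_of_half_lt_seqProb hcond hhalf, fun p hp hp' => ?_⟩
  refine ⟨decoyCond p, decoyCond_nonneg (by linarith) (by linarith), sum_decoyCond p,
    ![0, 0], ![1, 0], fun y hy => ?_, seqProb_decoyCond_zero p, isGreedy_decoyCond hp', by simp⟩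
  rw [seqProb_decoyCond_zero]
  exact seqProb_decoyCond_lt hp hy

theorem greedy_decoding_succeeds_for_sharpened_models_and_tightness :
    (∀ (V : Type) [Fintype V] (H : ℕ), 1 ≤ H →
      ∀ cond : List V → V → ℝ,
        (∀ l v, 0 ≤ cond l v) →
        (∀ l : List V, l.length < H → ∑ v : V, cond l v = 1) →
        ∀ ystar : Fin H → V,
          (∀ y : Fin H → V, y ≠ ystar → seqProb H cond y < seqProb H cond ystar) →
          1 / 2 < seqProb H cond ystar →
          ∀ yhat : Fin H → V, IsGreedy H cond yhat → yhat = ystar)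
    ∧
    (∃ (n H : ℕ) (cond : List (Fin n) → Fin n → ℝ),
      0 < n ∧ 1 ≤ H ∧
      (∀ l v, 0 ≤ cond l v) ∧
      (∀ l : List (Fin n), l.length < H → ∑ v, cond l v = 1) ∧
      ∃ ystar yhat : Fin H → Fin n,
        (∀ y, y ≠ ystar → seqProb H cond y < seqProb H cond ystar) ∧
        seqProb H cond ystar ≤ 1 / 2 ∧
        IsGreedy H cond yhat ∧ yhat ≠ ystar) := by
  obtain ⟨hsucceeds, htight⟩ :=
    greedy_decoding_succeeds_for_sharpened_models_and_tightness_general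
  obtain ⟨cond, hnonneg, hsum, ystar, yhat, hmax, hhalf, hgreedy, hne⟩ :=
    htight (1 / 2) (by norm_num) le_rfl
  exact ⟨fun V _ H _ cond hnonneg hsum ystar _ =>
      hsucceeds V H cond (.of_sum_eq_one (fun l _ => hnonneg l) hsum) ystar,
    2, 2, cond, two_pos, one_le_two, hnonneg, fun l _ => hsum l, ystar, yhat, hmax, hhalf.le,
    hgreedy, hne⟩
end

section
/- Let λ, K > 0 with λ ≤ K, let d, T ∈ ℕ, and let A_1,…,A_T ∈ ℝ^{d×d} be positive semi-definite matrices with Tr(A_t) ≤ K for all t ∈ [T]. Define Γ_0 := λ·I_d and Γ_t := λ·I_d + Σ_{i=1}^t A_i. Then Σ_{t=1}^T Tr(Γ_{t-1}^{-1} A_t) ≤ d·K·log((T+1)K/λ) / (λ·log(1+K/λ)). -/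
/-!
For `d × d` matrices write `Γ_t = V + ∑_{i < t} A_i`, `x_t = Tr (Γ_t⁻¹ A_t)` and
`Δ_t = log det Γ_{t+1} - log det Γ_t`. Factoring out `Γ_t` turns `Δ_t` into `∑ log (1 + μ_j)`, where
the `μ_j ≥ 0` are the eigenvalues of a positive semidefinite matrix of trace `x_t`; hence
`log (1 + x_t) ≤ Δ_t`. Inversion is antitone, so `x_t ≤ Tr (V⁻¹ A_t) ≤ c`, and on `[0, c]` the
concave function `log (1 + x)` lies above its chord `x * log (1 + c) / c`. Summing, the `Δ_t`
telescope to `log det Γ_T - log det V`, which the same factorization bounds by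
`d * log (1 + Tr (V⁻¹ ∑ A_i)) ≤ d * log (1 + T * c)`.
-/

theorem mul_log_one_add_le {x c : ℝ} (hx : 0 ≤ x) (hxc : x ≤ c) :
    x * Real.log (1 + c) ≤ c * Real.log (1 + x) := by
  obtain rfl | hc := (hx.trans hxc).eq_or_lt
  · simp [le_antisymm hxc hx]
  have bernoulli : (1 + c) ^ (x / c) ≤ 1 + x := by
    simpa [hc.ne'] using rpow_one_add_le_one_add_mul_self (by linarith : -1 ≤ c)
      (div_nonneg hx hc.le) (div_le_one_of_le₀ hxc hc.le)
  calc x * Real.log (1 + c) = c * Real.log ((1 + c) ^ (x / c)) := by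
        rw [Real.log_rpow (by positivity)]
        field_simp
    _ ≤ c * Real.log (1 + x) := by gcongr

theorem one_add_sum_le_prod_one_add {ι R : Type*} [CommSemiring R] [PartialOrder R]
    [IsOrderedRing R] (s : Finset ι) {f : ι → R} (hf : ∀ i ∈ s, 0 ≤ f i) :
    1 + ∑ i ∈ s, f i ≤ ∏ i ∈ s, (1 + f i) := by
  induction s using Finset.cons_induction with
  | empty => simp
  | cons a s ha ih =>
    rw [Finset.forall_mem_cons] at hf
    rw [Finset.sum_cons, Finset.prod_cons]
    calc 1 + (f a + ∑ i ∈ s, f i)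
        ≤ 1 + (f a + ∑ i ∈ s, f i) + f a * ∑ i ∈ s, f i :=
          le_add_of_nonneg_right (mul_nonneg hf.1 (Finset.sum_nonneg hf.2))
      _ = (1 + f a) * (1 + ∑ i ∈ s, f i) := by ring
      _ ≤ (1 + f a) * ∏ i ∈ s, (1 + f i) :=
          mul_le_mul_of_nonneg_left (ih hf.2) (add_nonneg zero_le_one hf.1)

theorem trace_smul_one_inv_mul {n R : Type*} [Fintype n] [DecidableEq n] [Field R] (c : R)
    (M : Matrix n n R) : ((c • (1 : Matrix n n R))⁻¹ * M).trace = M.trace / c := by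
  have hinv : (c • (1 : Matrix n n R))⁻¹ = c⁻¹ • 1 := by
    obtain rfl | hc := eq_or_ne c 0
    · simp
    · exact Matrix.inv_eq_right_inv (by simp [hc])
  rw [hinv, smul_one_mul, Matrix.trace_smul, smul_eq_mul, inv_mul_eq_div]

section

open scoped ComplexOrder MatrixOrder

variable {n 𝕜 : Type*} [Fintype n] [RCLike 𝕜] {V W M : Matrix n n 𝕜}

theorem trace_mul_nonneg_of_posSemidef (hV : V.PosSemidef) (hM : M.PosSemidef) :
    0 ≤ (V * M).trace := by
  classical
  obtain ⟨B, rfl⟩ := CStarAlgebra.nonneg_iff_eq_star_mul_self.mp hV.nonneg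
  rw [Matrix.mul_assoc, Matrix.trace_mul_comm]
  exact (hM.mul_mul_conjTranspose_same B).trace_nonneg

variable [DecidableEq n]

-- Both `V ≤ W` and `W⁻¹ ≤ V⁻¹` say that the block matrix with rows `W, 1` and `1, V⁻¹` is positive
-- semidefinite: they express the positivity of its two Schur complements.
theorem inv_le_inv_of_posDef (hV : V.PosDef) (hVW : V ≤ W) : W⁻¹ ≤ V⁻¹ := by
  have hW : W.PosDef := by simpa using hV.add_posSemidef (Matrix.le_iff.mp hVW)
  have := hW.isUnit.invertible
  have := hV.inv.isUnit.invertible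
  have schurW := Matrix.PosDef.fromBlocks₁₁ 1 V⁻¹ hW
  have schurV := Matrix.PosDef.fromBlocks₂₂ W 1 hV.inv
  simp only [Matrix.conjTranspose_one, mul_one, one_mul,
    Matrix.nonsing_inv_nonsing_inv V hV.det_pos.ne'.isUnit] at schurW schurV
  exact schurW.mp (schurV.mpr hVW)

theorem trace_inv_mul_le_trace_inv_mul (hV : V.PosDef) (hVW : V ≤ W) (hM : M.PosSemidef) :
    (W⁻¹ * M).trace ≤ (V⁻¹ * M).trace := by
  have h := trace_mul_nonneg_of_posSemidef (Matrix.le_iff.mp (inv_le_inv_of_posDef hV hVW)) hM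
  rwa [Matrix.sub_mul, Matrix.trace_sub, sub_nonneg] at h

theorem det_one_add_eq_prod_eigenvalues (hM : M.IsHermitian) :
    (1 + M).det = ∏ i, (1 + (hM.eigenvalues i : 𝕜)) := by
  conv_lhs =>
    rw [hM.spectral_theorem, Unitary.conjStarAlgAut_apply, Matrix.det_one_add_mul_comm,
      ← mul_assoc, Unitary.coe_star_mul_self, one_mul, ← Matrix.diagonal_one, Matrix.diagonal_add,
      Matrix.det_diagonal]
  rfl

theorem re_trace_eq_sum_eigenvalues (hM : M.IsHermitian) :
    RCLike.re M.trace = ∑ i, hM.eigenvalues i := by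
  rw [hM.trace_eq_sum_eigenvalues, ← RCLike.ofReal_sum, RCLike.ofReal_re]

/-- The log-determinant of a positive definite matrix, the potential function of the argument.
Such a matrix has a positive determinant even over `ℂ`, so taking the real part loses nothing. -/
noncomputable def logDet (V : Matrix n n 𝕜) : ℝ :=
  Real.log (RCLike.re V.det)

theorem logDet_one_add_eq_sum (hM : M.PosSemidef) :
    logDet (1 + M) = ∑ i, Real.log (1 + hM.isHermitian.eigenvalues i) := by
  rw [logDet, det_one_add_eq_prod_eigenvalues hM.isHermitian,
    ← Real.log_prod fun i _ ↦ (add_pos_of_pos_of_nonneg one_pos (hM.eigenvalues_nonneg i)).ne']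
  norm_cast

theorem log_one_add_trace_le_logDet_one_add (hM : M.PosSemidef) :
    Real.log (1 + RCLike.re M.trace) ≤ logDet (1 + M) := by
  have hpos (i : n) : 0 < 1 + hM.isHermitian.eigenvalues i :=
    add_pos_of_pos_of_nonneg one_pos (hM.eigenvalues_nonneg i)
  rw [logDet_one_add_eq_sum hM, re_trace_eq_sum_eigenvalues hM.isHermitian,
    ← Real.log_prod fun i _ ↦ (hpos i).ne']
  exact Real.log_le_log
    (add_pos_of_pos_of_nonneg one_pos (Finset.sum_nonneg fun i _ ↦ hM.eigenvalues_nonneg i))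
    (one_add_sum_le_prod_one_add _ fun i _ ↦ hM.eigenvalues_nonneg i)

theorem logDet_one_add_le (hM : M.PosSemidef) :
    logDet (1 + M) ≤ Fintype.card n * Real.log (1 + RCLike.re M.trace) := by
  rw [logDet_one_add_eq_sum hM, re_trace_eq_sum_eigenvalues hM.isHermitian, ← nsmul_eq_mul,
    ← Finset.card_univ]
  refine Finset.sum_le_card_nsmul _ _ _ fun i hi ↦ Real.log_le_log
    (add_pos_of_pos_of_nonneg one_pos (hM.eigenvalues_nonneg i)) ?_
  gcongr
  exact Finset.single_le_sum (fun j _ ↦ hM.eigenvalues_nonneg j) hi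

-- With `V⁻¹ = Bᴴ * B` the witness is `B * M * Bᴴ`, a Hermitian stand-in for `V⁻¹ * M`.
theorem exists_posSemidef_logDet_add_eq (hV : V.PosDef) (hM : M.PosSemidef) :
    ∃ N : Matrix n n 𝕜, N.PosSemidef ∧ N.trace = (V⁻¹ * M).trace ∧
      logDet (V + M) = logDet V + logDet (1 + N) := by
  obtain ⟨B, hB⟩ := CStarAlgebra.nonneg_iff_eq_star_mul_self.mp hV.inv.posSemidef.nonneg
  rw [Matrix.star_eq_conjTranspose] at hB
  have hN : (B * M * B.conjTranspose).PosSemidef := hM.mul_mul_conjTranspose_same B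
  refine ⟨_, hN, by rw [hB, Matrix.trace_mul_cycle], ?_⟩
  have hdet : (V + M).det = V.det * (1 + B * M * B.conjTranspose).det := by
    rw [← Matrix.det_one_add_mul_comm, ← Matrix.det_mul, ← Matrix.mul_assoc, ← hB, Matrix.mul_add,
      Matrix.mul_one, Matrix.mul_nonsing_inv_cancel_left _ _ hV.det_pos.ne'.isUnit]
  obtain ⟨δ, hδ, hVdet⟩ := RCLike.pos_iff_exists_ofReal.mp hV.det_pos
  have hNdet := (RCLike.pos_iff.mp (Matrix.PosDef.one.add_posSemidef hN).det_pos).1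
  rw [logDet, logDet, logDet, hdet, ← hVdet, RCLike.re_ofReal_mul, RCLike.ofReal_re,
    Real.log_mul hδ.ne' hNdet.ne']

theorem log_one_add_trace_inv_mul_le_logDet_sub (hV : V.PosDef) (hM : M.PosSemidef) :
    Real.log (1 + RCLike.re (V⁻¹ * M).trace) ≤ logDet (V + M) - logDet V := by
  obtain ⟨N, hN, htrace, hlogDet⟩ := exists_posSemidef_logDet_add_eq hV hM
  rw [hlogDet, add_sub_cancel_left, ← htrace]
  exact log_one_add_trace_le_logDet_one_add hN

theorem logDet_add_sub_le (hV : V.PosDef) (hM : M.PosSemidef) :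
    logDet (V + M) - logDet V ≤ Fintype.card n * Real.log (1 + RCLike.re (V⁻¹ * M).trace) := by
  obtain ⟨N, hN, htrace, hlogDet⟩ := exists_posSemidef_logDet_add_eq hV hM
  rw [hlogDet, add_sub_cancel_left, ← htrace]
  exact logDet_one_add_le hN

theorem re_trace_inv_mul_nonneg (hV : V.PosSemidef) (hM : M.PosSemidef) :
    0 ≤ RCLike.re (V⁻¹ * M).trace :=
  (RCLike.nonneg_iff.mp (trace_mul_nonneg_of_posSemidef hV.inv hM)).1

theorem re_trace_inv_mul_mul_log_le {c : ℝ} (hV : V.PosDef) (hM : M.PosSemidef)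
    (hc : RCLike.re (V⁻¹ * M).trace ≤ c) :
    RCLike.re (V⁻¹ * M).trace * Real.log (1 + c) ≤ c * (logDet (V + M) - logDet V) := by
  have hx := re_trace_inv_mul_nonneg hV.posSemidef hM
  exact (mul_log_one_add_le hx hc).trans
    (mul_le_mul_of_nonneg_left (log_one_add_trace_inv_mul_le_logDet_sub hV hM) (hx.trans hc))

theorem sum_re_trace_inv_mul_mul_log_le {T : ℕ} {A : ℕ → Matrix n n 𝕜} {c : ℝ} (hV : V.PosDef)
    (hA : ∀ t ∈ Finset.range T, (A t).PosSemidef)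
    (hc : ∀ t ∈ Finset.range T, RCLike.re (V⁻¹ * A t).trace ≤ c) :
    (∑ t ∈ Finset.range T, RCLike.re ((V + ∑ i ∈ Finset.range t, A i)⁻¹ * A t).trace) *
        Real.log (1 + c)
      ≤ c * (logDet (V + ∑ i ∈ Finset.range T, A i) - logDet V) := by
  induction T with
  | zero => simp
  | succ T ih =>
    simp only [Finset.range_add_one, Finset.forall_mem_insert] at hA hc
    have hsum : (∑ i ∈ Finset.range T, A i).PosSemidef := Matrix.posSemidef_sum _ hA.2
    have hle : V ≤ V + ∑ i ∈ Finset.range T, A i := le_add_of_nonneg_right hsum.nonneg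
    have htrace := (RCLike.re_le_re (trace_inv_mul_le_trace_inv_mul hV hle hA.1)).trans hc.1
    have hstep := re_trace_inv_mul_mul_log_le (hV.add_posSemidef hsum) hA.1 htrace
    rw [Finset.sum_range_succ, Finset.sum_range_succ, ← add_assoc]
    linarith [ih hA.2 hc.2]

theorem elliptic_potential_general (T : ℕ) {c : ℝ} (hc : 0 < c) (hV : V.PosDef)
    (A : ℕ → Matrix n n 𝕜) (hA : ∀ t ∈ Finset.range T, (A t).PosSemidef)
    (htr : ∀ t ∈ Finset.range T, RCLike.re (V⁻¹ * A t).trace ≤ c) :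
    ∑ t ∈ Finset.range T, RCLike.re ((V + ∑ i ∈ Finset.range t, A i)⁻¹ * A t).trace
      ≤ Fintype.card n * c * Real.log (1 + T * c) / Real.log (1 + c) := by
  have hsum : (∑ i ∈ Finset.range T, A i).PosSemidef := Matrix.posSemidef_sum _ hA
  have hnonneg := re_trace_inv_mul_nonneg hV.posSemidef hsum
  have htrace : RCLike.re (V⁻¹ * ∑ i ∈ Finset.range T, A i).trace ≤ T * c := by
    rw [Matrix.mul_sum, Matrix.trace_sum, map_sum]
    simpa using Finset.sum_le_card_nsmul _ _ c htr
  rw [le_div_iff₀ (Real.log_pos (by linarith))]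
  calc _ ≤ c * (logDet (V + ∑ i ∈ Finset.range T, A i) - logDet V) :=
        sum_re_trace_inv_mul_mul_log_le hV hA htr
    _ ≤ c * (Fintype.card n * Real.log (1 + RCLike.re (V⁻¹ * ∑ i ∈ Finset.range T, A i).trace)) :=
        mul_le_mul_of_nonneg_left (logDet_add_sub_le hV hsum) hc.le
    _ ≤ c * (Fintype.card n * Real.log (1 + T * c)) := by gcongr
    _ = Fintype.card n * c * Real.log (1 + T * c) := by ring

end

/-- Elliptic potential lemma. -/
theorem elliptic_potential
    (d T : ℕ) (lam K : ℝ) (hlam : 0 < lam) (hK : 0 < K) (hlamK : lam ≤ K)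
    (A : ℕ → Matrix (Fin d) (Fin d) ℝ)
    (hpsd : ∀ t ∈ Finset.range T, (A t).PosSemidef)
    (htr : ∀ t ∈ Finset.range T, (A t).trace ≤ K) :
    ∑ t ∈ Finset.range T,
        ((lam • (1 : Matrix (Fin d) (Fin d) ℝ) + ∑ i ∈ Finset.range t, A i)⁻¹ * A t).trace
      ≤ d * K * Real.log ((T + 1) * K / lam) / (lam * Real.log (1 + K / lam)) := by
  have hc : 0 < K / lam := div_pos hK hlam
  have hlog : 0 < Real.log (1 + K / lam) := Real.log_pos (by linarith)
  have htrace : ∀ t ∈ Finset.range T,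
      ((lam • (1 : Matrix (Fin d) (Fin d) ℝ))⁻¹ * A t).trace ≤ K / lam := fun t ht ↦ by
    rw [trace_smul_one_inv_mul]
    exact div_le_div_of_nonneg_right (htr t ht) hlam.le
  have hbase : 1 + T * (K / lam) ≤ (T + 1) * K / lam := by
    rw [mul_div_assoc, add_one_mul]
    linarith [(one_le_div hlam).mpr hlamK]
  calc _ ≤ d * (K / lam) * Real.log (1 + T * (K / lam)) / Real.log (1 + K / lam) := by
        simpa using elliptic_potential_general T hc (Matrix.PosDef.one.smul hlam) A hpsd htrace
    _ ≤ d * (K / lam) * Real.log ((T + 1) * K / lam) / Real.log (1 + K / lam) := by gcongr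
    _ = _ := by rw [← mul_div_assoc, div_mul_eq_mul_div, div_div]
end

section
/- Let (Z_t)_{t=1}^T be a sequence of random variables adapted to a filtration (F_t)_{t=1}^T on a probability space (with F_0 the trivial σ-algebra, or a given initial σ-algebra), and suppose Z_t ∈ [0,R] almost surely for all t, where R > 0. Then for any δ ∈ (0,1), with probability at least 1−δ, Σ_{t=1}^T E[Z_t | F_{t-1}] ≤ 2·Σ_{t=1}^T Z_t + 4R·log(1/δ). -/
open MeasureTheory
open scoped ENNReal

/-!
By convexity of `exp`, the bound `exp (l * R) ≤ 1 + c * R` propagates to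
`exp (l * x) ≤ 1 + c * x ≤ exp (c * x)` on `[0, R]`; only the first inequality is integrated, and
the second is applied to the conditional expectation, which gives
`E[exp (l * Z t) | ℱ (t - 1)] ≤ exp (c * E[Z t | ℱ (t - 1)])`. Hence
`exp (∑ t, (l * Z t - c * E[Z t | ℱ (t - 1)]))` is a supermartingale started at `1`, and Markov's
inequality bounds its exponent by `log (1 / δ)` outside an event of probability at most `δ`. For
`l = -a / b` and `c = -1 / b` this reads `∑ t, E[Z t | ℱ (t - 1)] ≤ a * ∑ t, Z t + b * log (1 / δ)`;
the choice `a = 2`, `b = 4 * R` is admissible because `exp (-1 / 2) ≤ 3 / 4`.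
-/

lemma exp_mul_le_one_add_mul_of_mem_Icc {l c R x : ℝ} (hR : Real.exp (l * R) ≤ 1 + c * R)
    (hx : x ∈ Set.Icc 0 R) : Real.exp (l * x) ≤ 1 + c * x := by
  have hconvex : ConvexOn ℝ Set.univ fun y : ℝ => Real.exp (l * y) - (1 + c * y) :=
    (convexOn_exp.comp_linearMap (LinearMap.mulLeft ℝ l)).sub
      ((concaveOn_const 1 convex_univ).add
        ((LinearMap.mulLeft ℝ c).concaveOn convex_univ))
  have hle_max := hconvex.le_max_of_mem_Icc (Set.mem_univ 0) (Set.mem_univ R) hx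
  have hmax : max (Real.exp (l * 0) - (1 + c * 0)) (Real.exp (l * R) - (1 + c * R)) ≤ 0 :=
    max_le (by simp) (sub_nonpos.2 hR)
  exact sub_nonpos.1 (hle_max.trans hmax)

section ConditionalExpectation

variable {Ω : Type*} {m m0 : MeasurableSpace Ω} {μ : Measure Ω} [IsFiniteMeasure μ] {Y : Ω → ℝ}

lemma condExp_mem_Icc_of_ae_mem_Icc (hm : m ≤ m0) {a b : ℝ} (hY : AEMeasurable Y μ)
    (hbdd : ∀ᵐ ω ∂μ, Y ω ∈ Set.Icc a b) : ∀ᵐ ω ∂μ, (μ[Y | m]) ω ∈ Set.Icc a b := by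
  have hYint : Integrable Y μ := .of_mem_Icc a b hY hbdd
  have hlower : μ[fun _ => a | m] ≤ᵐ[μ] μ[Y | m] :=
    condExp_mono (integrable_const a) hYint (hbdd.mono fun _ h => h.1)
  have hupper : μ[Y | m] ≤ᵐ[μ] μ[fun _ => b | m] :=
    condExp_mono hYint (integrable_const b) (hbdd.mono fun _ h => h.2)
  rw [condExp_const hm] at hlower hupper
  filter_upwards [hlower, hupper] with ω ha hb using ⟨ha, hb⟩

lemma condExp_exp_mul_le_exp_mul_condExp (hm : m ≤ m0) {l c R : ℝ}
    (hR : Real.exp (l * R) ≤ 1 + c * R) (hY : AEMeasurable Y μ)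
    (hbdd : ∀ᵐ ω ∂μ, Y ω ∈ Set.Icc 0 R) :
    μ[fun ω => Real.exp (l * Y ω) | m] ≤ᵐ[μ] fun ω => Real.exp (c * (μ[Y | m]) ω) := by
  have hYint : Integrable Y μ := .of_mem_Icc 0 R hY hbdd
  have hmono : μ[fun ω => Real.exp (l * Y ω) | m] ≤ᵐ[μ] μ[(fun _ => 1) + c • Y | m] :=
    condExp_mono (ProbabilityTheory.integrable_exp_mul_of_mem_Icc hY hbdd)
      ((integrable_const 1).add (hYint.smul c))
      (hbdd.mono fun _ h => exp_mul_le_one_add_mul_of_mem_Icc hR h)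
  have hadd := condExp_add (integrable_const (1 : ℝ)) (hYint.smul c) m
  rw [condExp_const hm] at hadd
  filter_upwards [hmono, hadd, condExp_smul c Y m] with ω hmono hadd hsmul
  calc (μ[fun ω => Real.exp (l * Y ω) | m]) ω
      ≤ 1 + c * (μ[Y | m]) ω := by
        simpa only [hadd, Pi.add_apply, hsmul, Pi.smul_apply, smul_eq_mul] using hmono
    _ ≤ Real.exp (c * (μ[Y | m]) ω) := by
        linarith [Real.add_one_le_exp (c * (μ[Y | m]) ω)]

lemma ae_mul_sub_mul_condExp_le (hm : m ≤ m0) (l c : ℝ) {R : ℝ} (hY : AEMeasurable Y μ)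
    (hbdd : ∀ᵐ ω ∂μ, Y ω ∈ Set.Icc 0 R) :
    ∀ᵐ ω ∂μ, l * Y ω - c * (μ[Y | m]) ω ≤ (|l| + |c|) * R := by
  have mul_le {k x : ℝ} (hx : x ∈ Set.Icc 0 R) : k * x ≤ |k| * R :=
    mul_le_mul (le_abs_self k) hx.2 hx.1 (abs_nonneg k)
  filter_upwards [hbdd, condExp_mem_Icc_of_ae_mem_Icc hm hY hbdd] with ω hYω hEω
  have hcE := mul_le (k := -c) hEω
  rw [abs_neg] at hcE
  linarith [mul_le (k := l) hYω]

lemma condExp_exp_mul_sub_mul_condExp_le_one (hm : m ≤ m0) {l c R : ℝ}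
    (hR : Real.exp (l * R) ≤ 1 + c * R) (hY : AEMeasurable Y μ)
    (hbdd : ∀ᵐ ω ∂μ, Y ω ∈ Set.Icc 0 R) :
    μ[fun ω => Real.exp (l * Y ω - c * (μ[Y | m]) ω) | m] ≤ᵐ[μ] 1 := by
  set A : Ω → ℝ := fun ω => Real.exp (-(c * (μ[Y | m]) ω)) with hA
  set B : Ω → ℝ := fun ω => Real.exp (l * Y ω)
  have hAmeas : StronglyMeasurable[m] A :=
    Real.continuous_exp.comp_stronglyMeasurable (stronglyMeasurable_condExp.const_mul c).neg
  have hAbound : ∀ᵐ ω ∂μ, ‖A ω‖ ≤ Real.exp (|c| * R) := by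
    filter_upwards [ae_mul_sub_mul_condExp_le hm 0 c hY hbdd] with ω h
    rw [Real.norm_of_nonneg (Real.exp_pos _).le]
    exact Real.exp_le_exp.2 (by simpa using h)
  have hpull : μ[A * B | m] =ᵐ[μ] A * μ[B | m] :=
    condExp_stronglyMeasurable_mul_of_bound hm hAmeas
      (ProbabilityTheory.integrable_exp_mul_of_mem_Icc hY hbdd) _ hAbound
  have hAB : (fun ω => Real.exp (l * Y ω - c * (μ[Y | m]) ω)) = A * B := by
    ext ω
    rw [sub_eq_neg_add, Real.exp_add, Pi.mul_apply]
  rw [hAB]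
  filter_upwards [hpull, condExp_exp_mul_le_exp_mul_condExp hm hR hY hbdd] with ω hpull hle
  calc (μ[A * B | m]) ω = A ω * (μ[B | m]) ω := hpull
    _ ≤ A ω * Real.exp (c * (μ[Y | m]) ω) := mul_le_mul_of_nonneg_left hle (Real.exp_pos _).le
    _ = 1 := by rw [hA, ← Real.exp_add, neg_add_cancel, Real.exp_zero]

end ConditionalExpectation

section Supermartingale

variable {Ω : Type*} {m0 : MeasurableSpace Ω} {μ : Measure Ω} {ℱ : Filtration ℕ m0}

lemma supermartingale_exp_sum [IsFiniteMeasure μ] {D : ℕ → Ω → ℝ} (hD : Adapted ℱ D) {K : ℕ → ℝ}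
    (hDK : ∀ t, ∀ᵐ ω ∂μ, D t ω ≤ K t)
    (hexp : ∀ t, μ[fun ω => Real.exp (D (t + 1) ω) | ℱ t] ≤ᵐ[μ] 1) :
    Supermartingale (fun n ω => Real.exp (∑ t ∈ Finset.Icc 1 n, D t ω)) ℱ μ := by
  set M : ℕ → Ω → ℝ := fun n ω => Real.exp (∑ t ∈ Finset.Icc 1 n, D t ω)
  have hM : StronglyAdapted ℱ M := fun n =>
    (Real.measurable_exp.comp (Finset.measurable_fun_sum _ fun t ht =>
      (hD t).mono (ℱ.mono (Finset.mem_Icc.1 ht).2) le_rfl)).stronglyMeasurable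
  have hMle (n : ℕ) : ∀ᵐ ω ∂μ, M n ω ≤ Real.exp (∑ t ∈ Finset.Icc 1 n, K t) := by
    filter_upwards [ae_all_iff.2 hDK] with ω h
    exact Real.exp_le_exp.2 (Finset.sum_le_sum fun t _ => h t)
  have hstep (n : ℕ) : M (n + 1) = M n * fun ω => Real.exp (D (n + 1) ω) := by
    ext ω
    simp only [M, Finset.sum_Icc_succ_top (Nat.le_add_left 1 n), Real.exp_add, Pi.mul_apply]
  have hexpD (t : ℕ) : Integrable (fun ω => Real.exp (D t ω)) μ :=
    .of_mem_Icc 0 (Real.exp (K t))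
      (Real.measurable_exp.comp ((hD t).mono (ℱ.le t) le_rfl)).aemeasurable
      ((hDK t).mono fun _ h => ⟨(Real.exp_pos _).le, Real.exp_le_exp.2 h⟩)
  refine supermartingale_nat hM (fun n => ?_) fun n => ?_
  · exact .of_mem_Icc 0 _ ((hM n).mono (ℱ.le n)).measurable.aemeasurable
      ((hMle n).mono fun _ h => ⟨(Real.exp_pos _).le, h⟩)
  · have hpull : μ[M (n + 1) | ℱ n] =ᵐ[μ] M n * μ[fun ω => Real.exp (D (n + 1) ω) | ℱ n] := by
      rw [hstep]
      exact condExp_stronglyMeasurable_mul_of_bound (ℱ.le n) (hM n) (hexpD _) _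
        ((hMle n).mono fun _ h => (Real.norm_of_nonneg (Real.exp_pos _).le).trans_le h)
    filter_upwards [hpull, hexp n] with ω hpull hle
    rw [hpull]
    exact mul_le_of_le_one_right (Real.exp_pos _).le hle

lemma supermartingale_exp_sum_mul_sub_mul_condExp [IsFiniteMeasure μ] {Z : ℕ → Ω → ℝ}
    {l c R : ℝ} (hR : Real.exp (l * R) ≤ 1 + c * R) (hZ : Adapted ℱ Z)
    (hbdd : ∀ t, ∀ᵐ ω ∂μ, Z t ω ∈ Set.Icc 0 R) :
    Supermartingale (fun n ω =>
      Real.exp (∑ t ∈ Finset.Icc 1 n, (l * Z t ω - c * (μ[Z t | ℱ (t - 1)]) ω))) ℱ μ := by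
  have hZmeas (t : ℕ) : AEMeasurable (Z t) μ := ((hZ t).mono (ℱ.le t) le_rfl).aemeasurable
  have hEmeas (t : ℕ) : Measurable[ℱ t] (μ[Z t | ℱ (t - 1)]) :=
    stronglyMeasurable_condExp.measurable.mono (ℱ.mono (Nat.sub_le t 1)) le_rfl
  exact supermartingale_exp_sum
    (fun t => ((hZ t).const_mul l).sub ((hEmeas t).const_mul c))
    (fun t => ae_mul_sub_mul_condExp_le (ℱ.le (t - 1)) l c (hZmeas t) (hbdd t))
    (fun t => condExp_exp_mul_sub_mul_condExp_le_one (ℱ.le t) hR (hZmeas (t + 1)) (hbdd (t + 1)))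

lemma ofReal_one_sub_le_measure_le_log [IsProbabilityMeasure μ] {X : Ω → ℝ}
    (hint : Integrable (fun ω => Real.exp (X ω)) μ) (hle : ∫ ω, Real.exp (X ω) ∂μ ≤ 1)
    {δ : ℝ} (hδ : 0 < δ) :
    ENNReal.ofReal (1 - δ) ≤ μ {ω | X ω ≤ Real.log (1 / δ)} := by
  set S := {ω | X ω ≤ Real.log (1 / δ)}
  have hSc : μ.real Sᶜ ≤ δ :=
    calc μ.real Sᶜ ≤ μ.real {ω | Real.log (1 / δ) ≤ X ω} :=
          measureReal_mono fun ω (hω : ¬X ω ≤ _) => (not_le.1 hω).le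
      _ ≤ Real.exp (-1 * Real.log (1 / δ)) * ProbabilityTheory.mgf X μ 1 :=
          ProbabilityTheory.measure_ge_le_exp_mul_mgf _ zero_le_one (by simpa using hint)
      _ = δ * ∫ ω, Real.exp (X ω) ∂μ := by simp [ProbabilityTheory.mgf, Real.exp_log hδ]
      _ ≤ δ := mul_le_of_le_one_right hδ.le hle
  have hone : 1 ≤ μ.real S + μ.real Sᶜ :=
    calc (1 : ℝ) = μ.real (S ∪ Sᶜ) := by simp
      _ ≤ μ.real S + μ.real Sᶜ := measureReal_union_le S Sᶜ
  exact ENNReal.ofReal_le_of_le_toReal (by rw [← measureReal_def]; linarith)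

theorem sum_condexp_le_sum_general [IsProbabilityMeasure μ] (T : ℕ) {Z : ℕ → Ω → ℝ}
    (hadapted : Adapted ℱ Z) {R : ℝ} (hbdd : ∀ t, ∀ᵐ ω ∂μ, Z t ω ∈ Set.Icc 0 R) {a b : ℝ}
    (hb : 0 < b) (hab : Real.exp (-(a * R / b)) ≤ 1 - R / b) {δ : ℝ} (hδ : 0 < δ) :
    ENNReal.ofReal (1 - δ) ≤
      μ {ω | ∑ t ∈ Finset.Icc 1 T, (μ[Z t | ℱ (t - 1)]) ω
              ≤ a * ∑ t ∈ Finset.Icc 1 T, Z t ω + b * Real.log (1 / δ)} := by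
  have hR : Real.exp (-a / b * R) ≤ 1 + -1 / b * R := by
    convert hab using 1 <;> ring_nf
  have hsuper := supermartingale_exp_sum_mul_sub_mul_condExp hR hadapted hbdd
  have hle_one : ∫ ω, Real.exp (∑ t ∈ Finset.Icc 1 T,
      (-a / b * Z t ω - -1 / b * (μ[Z t | ℱ (t - 1)]) ω)) ∂μ ≤ 1 := by
    simpa only [Measure.restrict_univ, Finset.Icc_eq_empty_of_lt Nat.zero_lt_one,
      Finset.sum_empty, Real.exp_zero, integral_const, probReal_univ, one_smul]
      using hsuper.setIntegral_le (Nat.zero_le T) MeasurableSet.univ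
  refine (ofReal_one_sub_le_measure_le_log (hsuper.integrable T) hle_one hδ).trans
    (measure_mono fun ω hω => ?_)
  rw [Set.mem_ofPred_eq, Finset.sum_sub_distrib, ← Finset.mul_sum, ← Finset.mul_sum] at hω
  rw [Set.mem_ofPred_eq]
  field_simp at hω
  linarith

end Supermartingale

lemma exp_neg_half_le_three_quarters : Real.exp (-(1 / 2)) ≤ 3 / 4 := by
  rw [Real.exp_neg, inv_le_comm₀ (Real.exp_pos _) (by norm_num)]
  linarith [Real.add_one_le_exp (1 / 2 : ℝ)]

/-- Freedman-type corollary: for an adapted sequence of `[0,R]`-valued random variables,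
with probability at least `1 - δ` the sum of conditional expectations is at most twice
the realized sum plus `4R log(1/δ)`. -/
theorem sum_condexp_le_sum
    {Ω : Type} {m0 : MeasurableSpace Ω} (μ : Measure Ω) [IsProbabilityMeasure μ]
    (ℱ : Filtration ℕ m0) (T : ℕ) (R : ℝ) (hR : 0 < R)
    (Z : ℕ → Ω → ℝ) (hadapted : Adapted ℱ Z)
    (hbdd : ∀ t, ∀ᵐ ω ∂μ, Z t ω ∈ Set.Icc (0 : ℝ) R)
    (δ : ℝ) (hδ : δ ∈ Set.Ioo (0 : ℝ) 1) :
    ENNReal.ofReal (1 - δ) ≤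
      μ {ω | ∑ t ∈ Finset.Icc 1 T, (μ[Z t | ℱ (t - 1)]) ω
              ≤ 2 * ∑ t ∈ Finset.Icc 1 T, Z t ω + 4 * R * Real.log (1 / δ)} :=
  sum_condexp_le_sum_general T hadapted hbdd (by positivity)
    (by convert exp_neg_half_le_three_quarters using 1 <;> field_simp <;> norm_num) hδ.1
end

section
/- Let X be a prompt set with probability distribution μ and Y a finite response set. Let π_base be a conditional distribution with π_base(y|x) > 0 for all x, y, let y*(x) := argmax_{y∈Y} π_base(y|x) denote the set of maximizers, and let C_cov := E_{x∼μ}[1/π_base(y*(x)|x)]. For β > 0 define π*_β(y|x) := π_base(y|x)^{1+1/β} / Σ_{y'∈Y} π_base(y'|x)^{1+1/β}. Then: (i) E_{x∼μ, y∼π*_β(·|x)}[π*_β(y|x)/π_base(y|x)] ≤ C_cov; and (ii) E_{x∼μ, y∼π_base(·|x)}[(π_base(y|x)/π*_β(y|x))^β] ≤ |Y|. -/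
open MeasureTheory Finset
open scoped ENNReal Classical

/-!
Write `p = π_base(·|x)`, `q = π*_β(·|x)` and `Z = ∑ p ^ (1 + 1 / β)`. The likelihood ratio
`q / p = p ^ (1 / β) / Z` increases with `p`, so it is largest at the modes of `p`. There it is
constant, hence at most `1 / p(modes)` because `q` gives the modes mass at most one. So
`q / p ≤ 1 / p(modes)` everywhere, and (i) follows by averaging over `q`. For (ii), raising
`p / q = Z / p ^ (1 / β)` to the power `β` cancels the weight: each response with `p y > 0`
contributes exactly `Z ^ β`, and `Z ≤ 1`.
-/

section Escort

variable {Y : Type*} [Fintype Y] {p : Y → ℝ}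

/-- The escort distribution of order `r` of `p`, proportional to `p ^ r`. The tilted model
`π*_β(·|x)` is the escort distribution of order `1 + 1 / β` of `π_base(·|x)`. -/
noncomputable def escort (p : Y → ℝ) (r : ℝ) (y : Y) : ℝ :=
  p y ^ r / ∑ y', p y' ^ r

/-- The set of maximizers of `p`, written `y*(x)` in the paper for `p = π_base(·|x)`. -/
noncomputable def modes (p : Y → ℝ) : Finset Y :=
  univ.filter fun y => ∀ y', p y' ≤ p y

theorem exists_pos_of_mem_stdSimplex (hp : p ∈ stdSimplex ℝ Y) : ∃ y, 0 < p y := by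
  have hsum : 0 < ∑ y, p y := hp.2 ▸ one_pos
  simpa using (sum_pos_iff_of_nonneg fun y _ => hp.1 y).1 hsum

theorem sum_modes_pos (hp : p ∈ stdSimplex ℝ Y) : 0 < ∑ y ∈ modes p, p y := by
  obtain ⟨y, hy⟩ := exists_pos_of_mem_stdSimplex hp
  have : Nonempty Y := ⟨y⟩
  obtain ⟨m, hm⟩ := Finite.exists_max p
  exact sum_pos' (fun y _ => hp.1 y) ⟨m, by simpa [modes] using hm, hy.trans_le (hm y)⟩

theorem sum_rpow_pos (hp : p ∈ stdSimplex ℝ Y) (r : ℝ) : 0 < ∑ y, p y ^ r := by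
  obtain ⟨y, hy⟩ := exists_pos_of_mem_stdSimplex hp
  exact sum_pos' (fun y _ => Real.rpow_nonneg (hp.1 y) r)
    ⟨y, mem_univ y, Real.rpow_pos_of_pos hy r⟩

theorem sum_rpow_le_one (hp : p ∈ stdSimplex ℝ Y) {r : ℝ} (hr : 1 ≤ r) :
    ∑ y, p y ^ r ≤ 1 :=
  calc ∑ y, p y ^ r
    _ ≤ ∑ y, p y := sum_le_sum fun y _ =>
        Real.rpow_le_self_of_le_one (hp.1 y) (mem_Icc_of_mem_stdSimplex hp y).2 hr
    _ = 1 := hp.2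

theorem escort_mem_stdSimplex (hp : p ∈ stdSimplex ℝ Y) (r : ℝ) :
    escort p r ∈ stdSimplex ℝ Y := by
  refine ⟨fun y => div_nonneg (Real.rpow_nonneg (hp.1 y) r) (sum_rpow_pos hp r).le, ?_⟩
  simp only [escort]
  rw [← sum_div, div_self (sum_rpow_pos hp r).ne']

theorem rpow_mul_sum_modes_le (hp : 0 ≤ p) {s : ℝ} (hs : 0 ≤ s) (y : Y) :
    p y ^ s * ∑ m ∈ modes p, p m ≤ ∑ m, p m ^ (1 + s) :=
  calc p y ^ s * ∑ m ∈ modes p, p m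
    _ = ∑ m ∈ modes p, p m * p y ^ s := by rw [mul_comm, sum_mul]
    _ ≤ ∑ m ∈ modes p, p m * p m ^ s := sum_le_sum fun m hm =>
        mul_le_mul_of_nonneg_left
          (Real.rpow_le_rpow (hp y) ((mem_filter.mp hm).2 y) hs) (hp m)
    _ = ∑ m ∈ modes p, p m ^ (1 + s) := sum_congr rfl fun m _ =>
        (Real.rpow_one_add' (hp m) (by positivity)).symm
    _ ≤ ∑ m, p m ^ (1 + s) := sum_le_sum_of_subset_of_nonneg (subset_univ _)
        fun m _ _ => Real.rpow_nonneg (hp m) _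

theorem escort_mul_sum_modes_le (hp : 0 ≤ p) {s : ℝ} (hs : 0 ≤ s) (y : Y) :
    escort p (1 + s) y * ∑ m ∈ modes p, p m ≤ p y := by
  rw [escort, div_mul_eq_mul_div]
  refine div_le_of_le_mul₀ (sum_nonneg fun m _ => Real.rpow_nonneg (hp m) _) (hp y) ?_
  rw [Real.rpow_one_add' (hp y) (by positivity), mul_assoc]
  exact mul_le_mul_of_nonneg_left (rpow_mul_sum_modes_le hp hs y) (hp y)

theorem sum_escort_mul_escort_div_le (hp : p ∈ stdSimplex ℝ Y) {s : ℝ} (hs : 0 ≤ s) :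
    ∑ y, escort p (1 + s) y * (escort p (1 + s) y / p y) ≤ 1 / ∑ y ∈ modes p, p y := by
  have hescort := escort_mem_stdSimplex hp (1 + s)
  have hratio (y : Y) : escort p (1 + s) y / p y ≤ 1 / ∑ m ∈ modes p, p m := by
    refine div_le_of_le_mul₀ (hp.1 y) (one_div_pos.2 (sum_modes_pos hp)).le ?_
    rw [one_div_mul_eq_div, le_div_iff₀ (sum_modes_pos hp)]
    exact escort_mul_sum_modes_le hp.1 hs y
  calc ∑ y, escort p (1 + s) y * (escort p (1 + s) y / p y)
    _ ≤ ∑ y, escort p (1 + s) y * (1 / ∑ m ∈ modes p, p m) :=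
        sum_le_sum fun y _ => mul_le_mul_of_nonneg_left (hratio y) (hescort.1 y)
    _ = 1 / ∑ y ∈ modes p, p y := by rw [← sum_mul, hescort.2, one_mul]

theorem mul_div_escort_rpow (hp : 0 ≤ p) {y : Y} (hy : 0 < p y) {β : ℝ} (hβ : β ≠ 0) :
    p y * (p y / escort p (1 + 1 / β) y) ^ β = (∑ y', p y' ^ (1 + 1 / β)) ^ β := by
  have hZ : 0 ≤ ∑ y', p y' ^ (1 + 1 / β) := sum_nonneg fun y' _ => Real.rpow_nonneg (hp y') _
  have hroot : 0 < p y ^ (1 / β) := Real.rpow_pos_of_pos hy _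
  have hratio : p y / escort p (1 + 1 / β) y = (∑ y', p y' ^ (1 + 1 / β)) / p y ^ (1 / β) := by
    rw [escort, div_div_eq_mul_div, Real.rpow_add hy, Real.rpow_one, mul_div_mul_left _ _ hy.ne']
  rw [hratio, Real.div_rpow hZ hroot.le, ← Real.rpow_mul hy.le, one_div_mul_cancel hβ,
    Real.rpow_one, mul_div_cancel₀ _ hy.ne']

theorem sum_mul_div_escort_rpow_le_card (hp : p ∈ stdSimplex ℝ Y) {β : ℝ} (hβ : 0 < β) :
    ∑ y, p y * (p y / escort p (1 + 1 / β) y) ^ β ≤ Fintype.card Y := by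
  have hterm (y : Y) : p y * (p y / escort p (1 + 1 / β) y) ^ β ≤ 1 := by
    rcases (hp.1 y).eq_or_lt with hy | hy
    · simp [← hy]
    · have hexp : 1 ≤ 1 + 1 / β := le_add_of_nonneg_right (by positivity)
      rw [mul_div_escort_rpow hp.1 hy hβ.ne']
      exact Real.rpow_le_one (sum_rpow_pos hp _).le (sum_rpow_le_one hp hexp) hβ.le
  simpa using sum_le_card_nsmul univ _ 1 fun y _ => hterm y

end Escort

/-- Responses with `pb x y = 0` are allowed: the quotients there are `0 / 0`, but they carry
weight zero in both expectations. -/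
theorem tilted_model_concentrability_general
    {X : Type*} [MeasurableSpace X] (μ : Measure X) [IsProbabilityMeasure μ]
    {Y : Type*} [Fintype Y] (pb : X → Y → ℝ) (hpb : ∀ x, pb x ∈ stdSimplex ℝ Y)
    (β : ℝ) (hβ : 0 < β) :
    (∫⁻ x, ENNReal.ofReal (∑ y,
        escort (pb x) (1 + 1 / β) y * (escort (pb x) (1 + 1 / β) y / pb x y)) ∂μ
      ≤ ∫⁻ x, ENNReal.ofReal (1 / ∑ y ∈ modes (pb x), pb x y) ∂μ)
    ∧
    (∫⁻ x, ENNReal.ofReal (∑ y, pb x y * (pb x y / escort (pb x) (1 + 1 / β) y) ^ β) ∂μ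
      ≤ (Fintype.card Y : ℝ≥0∞)) := by
  constructor
  · exact lintegral_mono fun x => ENNReal.ofReal_le_ofReal
      (sum_escort_mul_escort_div_le (hpb x) (by positivity))
  · calc ∫⁻ x, ENNReal.ofReal (∑ y, pb x y * (pb x y / escort (pb x) (1 + 1 / β) y) ^ β) ∂μ
      _ ≤ ∫⁻ _, (Fintype.card Y : ℝ≥0∞) ∂μ := lintegral_mono fun x =>
          ENNReal.ofReal_le_of_le_toReal (sum_mul_div_escort_rpow_le_card (hpb x) hβ)
      _ = Fintype.card Y := by rw [lintegral_const, measure_univ, mul_one]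

/-- Coverage bounds for the KL-regularized optimal (power-tilted) model `π*_β`:
(i) its concentrability w.r.t. `π_base` is at most the coverage coefficient `C_cov`,
and (ii) `E_{π_base}[(π_base/π*_β)^β] ≤ |Y|`. -/
theorem tilted_model_concentrability
    {X : Type} [MeasurableSpace X] (μ : Measure X) [IsProbabilityMeasure μ]
    {Y : Type} [Fintype Y] [Nonempty Y]
    (pb : X → Y → ℝ) (hpos : ∀ x y, 0 < pb x y) (hsum : ∀ x, ∑ y, pb x y = 1)
    (β : ℝ) (hβ : 0 < β) :
    (∫⁻ x, ENNReal.ofReal (∑ y,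
        (pb x y ^ (1 + 1 / β) / ∑ y', pb x y' ^ (1 + 1 / β)) *
          ((pb x y ^ (1 + 1 / β) / ∑ y', pb x y' ^ (1 + 1 / β)) / pb x y)) ∂μ
      ≤ ∫⁻ x, ENNReal.ofReal
          (1 / ∑ y ∈ univ.filter (fun y => ∀ y', pb x y' ≤ pb x y), pb x y) ∂μ)
    ∧
    (∫⁻ x, ENNReal.ofReal (∑ y, pb x y *
        ((pb x y / (pb x y ^ (1 + 1 / β) / ∑ y', pb x y' ^ (1 + 1 / β))) ^ β)) ∂μ
      ≤ (Fintype.card Y : ℝ≥0∞)) :=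
  tilted_model_concentrability_general μ pb (fun x => ⟨fun y => (hpos x y).le, hsum x⟩) β hβ
end

section
/- Let X be a prompt set with probability distribution μ and Y a finite response set. Let π_base and π be conditional distributions with π_base(y|x) > 0 and π(y|x) > 0 for all x, y, and let β ∈ (0,1]. Define C := E_{x∼μ, y∼π_base(·|x)}[(π_base(y|x)/π(y|x))^β]. Then for all s > 0, the probability over x ∼ μ and y, y' drawn i.i.d. from π_base(·|x) of the event |β·log(π(y|x)/π_base(y|x)) − β·log(π(y'|x)/π_base(y'|x))| > log(2C) + s is at most e^{−s}. -/
open MeasureTheory Finset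
open scoped ENNReal Classical

/-!
For fixed `x` put `Z y = β log (π(y|x) / π_base(y|x))`. Markov's inequality for `exp |Z y - Z y'|`,
bounded by `exp (Z y - Z y') + exp (Z y' - Z y)`, gives the tail bound
`2 e^{-t} E[exp Z] E[exp (-Z)]`, the expectations factoring because `y` and `y'` are independent.
Weighted AM-GM gives `E[exp Z] = ∑ π_base^{1-β} π^β ≤ 1`, while `E[exp (-Z)]` averages to `C`
over `x`; at `t = log (2C) + s` the factor `2C` cancels.
-/

lemma ite_lt_abs_le_exp_neg_mul (t u : ℝ) :
    (if t < |u| then (1 : ℝ) else 0) ≤ Real.exp (-t) * (Real.exp u + Real.exp (-u)) := by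
  split_ifs with h
  · calc (1 : ℝ) = Real.exp (-t) * Real.exp t := by
          rw [← Real.exp_add, neg_add_cancel, Real.exp_zero]
      _ ≤ Real.exp (-t) * Real.exp |u| := by gcongr
      _ ≤ Real.exp (-t) * (Real.exp u + Real.exp (-u)) := by gcongr; exact Real.exp_abs_le u
  · positivity

lemma exp_neg_log_add_mul_self_le {a : ℝ} (ha : 0 ≤ a) (s : ℝ) :
    Real.exp (-(Real.log a + s)) * a ≤ Real.exp (-s) := by
  rcases ha.eq_or_lt with rfl | ha
  · simpa using (Real.exp_pos (-s)).le
  · rw [neg_add, Real.exp_add, Real.exp_neg (Real.log a), Real.exp_log ha, mul_right_comm,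
      inv_mul_cancel₀ ha.ne', one_mul]

lemma mul_div_rpow_le_weighted_add {a b β : ℝ} (ha : 0 < a) (hb : 0 ≤ b) (hβ : β ∈ Set.Icc 0 1) :
    a * (b / a) ^ β ≤ (1 - β) * a + β * b :=
  calc a * (b / a) ^ β = a ^ (1 - β) * b ^ β := by
        rw [Real.div_rpow hb ha.le, Real.rpow_sub ha, Real.rpow_one, mul_div_assoc',
          div_mul_eq_mul_div]
    _ ≤ (1 - β) * a + β * b :=
        Real.geom_mean_le_arith_mean2_weighted (sub_nonneg.2 hβ.2) hβ.1 ha.le hb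
          (sub_add_cancel 1 β)

section FiniteSums

variable {ι : Type*} {S : Finset ι}

lemma sum_mul_div_rpow_le_one {p q : ι → ℝ} (hp : ∀ i ∈ S, 0 < p i) (hp1 : ∑ i ∈ S, p i ≤ 1)
    (hq : ∀ i ∈ S, 0 ≤ q i) (hq1 : ∑ i ∈ S, q i ≤ 1) {β : ℝ} (hβ : β ∈ Set.Icc 0 1) :
    ∑ i ∈ S, p i * (q i / p i) ^ β ≤ 1 :=
  calc ∑ i ∈ S, p i * (q i / p i) ^ β ≤ ∑ i ∈ S, ((1 - β) * p i + β * q i) :=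
        sum_le_sum fun i hi => mul_div_rpow_le_weighted_add (hp i hi) (hq i hi) hβ
    _ = (1 - β) * ∑ i ∈ S, p i + β * ∑ i ∈ S, q i := by
        rw [sum_add_distrib, mul_sum, mul_sum]
    _ ≤ (1 - β) * 1 + β * 1 :=
        add_le_add (mul_le_mul_of_nonneg_left hp1 (sub_nonneg.2 hβ.2))
          (mul_le_mul_of_nonneg_left hq1 hβ.1)
    _ = 1 := by ring

lemma sum_sum_mul_ite_lt_abs_sub_le {w : ι → ℝ} (hw : ∀ i ∈ S, 0 ≤ w i) (Z : ι → ℝ) (t : ℝ) :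
    ∑ i ∈ S, ∑ j ∈ S, w i * w j * (if t < |Z i - Z j| then (1 : ℝ) else 0) ≤
      Real.exp (-t) *
        (2 * ((∑ i ∈ S, w i * Real.exp (Z i)) * ∑ j ∈ S, w j * Real.exp (-Z j))) := by
  have product_eq_sum_sum : (∑ i ∈ S, w i * Real.exp (Z i)) * ∑ j ∈ S, w j * Real.exp (-Z j) =
      ∑ i ∈ S, ∑ j ∈ S, w i * w j * Real.exp (Z i - Z j) := by
    simp_rw [sum_mul_sum, mul_mul_mul_comm, ← Real.exp_add, sub_eq_add_neg]
  have sum_swap : ∑ i ∈ S, ∑ j ∈ S, w i * w j * Real.exp (-(Z i - Z j)) =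
      ∑ i ∈ S, ∑ j ∈ S, w i * w j * Real.exp (Z i - Z j) := by
    rw [sum_comm]
    simp_rw [neg_sub, mul_comm (w _) (w _)]
  calc ∑ i ∈ S, ∑ j ∈ S, w i * w j * (if t < |Z i - Z j| then (1 : ℝ) else 0)
      ≤ ∑ i ∈ S, ∑ j ∈ S, w i * w j *
          (Real.exp (-t) * (Real.exp (Z i - Z j) + Real.exp (-(Z i - Z j)))) :=
        sum_le_sum fun i hi => sum_le_sum fun j hj =>
          mul_le_mul_of_nonneg_left (ite_lt_abs_le_exp_neg_mul t _) (mul_nonneg (hw i hi) (hw j hj))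
    _ = Real.exp (-t) * (∑ i ∈ S, ∑ j ∈ S, w i * w j * Real.exp (Z i - Z j) +
          ∑ i ∈ S, ∑ j ∈ S, w i * w j * Real.exp (-(Z i - Z j))) := by
        simp_rw [mul_left_comm _ (Real.exp (-t)), mul_add, sum_add_distrib, mul_sum]
    _ = Real.exp (-t) *
          (2 * ((∑ i ∈ S, w i * Real.exp (Z i)) * ∑ j ∈ S, w j * Real.exp (-Z j))) := by
        rw [sum_swap, ← two_mul, product_eq_sum_sum]

lemma sum_sum_mul_ite_lt_abs_log_div_sub_le {p q : ι → ℝ}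
    (hp : ∀ i ∈ S, 0 < p i) (hp1 : ∑ i ∈ S, p i ≤ 1)
    (hq : ∀ i ∈ S, 0 < q i) (hq1 : ∑ i ∈ S, q i ≤ 1) {β : ℝ} (hβ : β ∈ Set.Icc 0 1) (t : ℝ) :
    ∑ i ∈ S, ∑ j ∈ S, p i * p j *
        (if t < |β * Real.log (q i / p i) - β * Real.log (q j / p j)| then (1 : ℝ) else 0) ≤
      Real.exp (-t) * (2 * ∑ i ∈ S, p i * (p i / q i) ^ β) := by
  have exp_log_ratio : ∑ i ∈ S, p i * Real.exp (β * Real.log (q i / p i)) =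
      ∑ i ∈ S, p i * (q i / p i) ^ β := sum_congr rfl fun i hi => by
    rw [Real.rpow_def_of_pos (div_pos (hq i hi) (hp i hi)), mul_comm β]
  have exp_neg_log_ratio : ∑ i ∈ S, p i * Real.exp (-(β * Real.log (q i / p i))) =
      ∑ i ∈ S, p i * (p i / q i) ^ β := sum_congr rfl fun i hi => by
    rw [Real.rpow_def_of_pos (div_pos (hp i hi) (hq i hi)), ← inv_div (q i), Real.log_inv,
      neg_mul, mul_comm β]
  have inverse_moment_nonneg : 0 ≤ ∑ i ∈ S, p i * (p i / q i) ^ β := sum_nonneg fun i hi =>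
    mul_nonneg (hp i hi).le (Real.rpow_nonneg (div_pos (hp i hi) (hq i hi)).le β)
  have tail := sum_sum_mul_ite_lt_abs_sub_le (fun i hi => (hp i hi).le)
    (fun i => β * Real.log (q i / p i)) t
  rw [exp_log_ratio, exp_neg_log_ratio] at tail
  refine tail.trans ?_
  gcongr
  exact mul_le_of_le_one_left inverse_moment_nonneg
    (sum_mul_div_rpow_le_one hp hp1 (fun i hi => (hq i hi).le) hq1 hβ)

end FiniteSums

theorem log_ratio_tail_bound_general
    {X : Type*} [MeasurableSpace X] (μ : Measure X) {Y : Type*} [Fintype Y]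
    (pb : X → Y → ℝ) (hbpos : ∀ x y, 0 < pb x y) (hbsum : ∀ x, ∑ y, pb x y ≤ 1)
    (pp : X → Y → ℝ) (hppos : ∀ x y, 0 < pp x y) (hpsum : ∀ x, ∑ y, pp x y ≤ 1)
    (β : ℝ) (hβ : β ∈ Set.Icc (0 : ℝ) 1)
    (C : ℝ)
    (hC : C = ∫ x, ∑ y, pb x y * (pb x y / pp x y) ^ β ∂μ)
    (hCint : Integrable (fun x => ∑ y, pb x y * (pb x y / pp x y) ^ β) μ)
    (s : ℝ) :
    ∫⁻ x, ENNReal.ofReal (∑ y, ∑ y', pb x y * pb x y' *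
        (if Real.log (2 * C) + s <
            |β * Real.log (pp x y / pb x y) - β * Real.log (pp x y' / pb x y')|
          then 1 else 0)) ∂μ
      ≤ ENNReal.ofReal (Real.exp (-s)) := by
  have inverse_moment_nonneg (x : X) : 0 ≤ ∑ y, pb x y * (pb x y / pp x y) ^ β :=
    sum_nonneg fun y _ =>
      mul_nonneg (hbpos x y).le (Real.rpow_nonneg (div_pos (hbpos x y) (hppos x y)).le β)
  have C_nonneg : 0 ≤ C := hC ▸ integral_nonneg inverse_moment_nonneg
  calc _ ≤ ∫⁻ x, ENNReal.ofReal (Real.exp (-(Real.log (2 * C) + s)) *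
          (2 * ∑ y, pb x y * (pb x y / pp x y) ^ β)) ∂μ :=
        lintegral_mono fun x => ENNReal.ofReal_le_ofReal <|
          sum_sum_mul_ite_lt_abs_log_div_sub_le (fun y _ => hbpos x y) (hbsum x)
            (fun y _ => hppos x y) (hpsum x) hβ _
    _ = ENNReal.ofReal (Real.exp (-(Real.log (2 * C) + s)) * (2 * C)) := by
        rw [← ofReal_integral_eq_lintegral_ofReal ((hCint.const_mul 2).const_mul _)
          (.of_forall fun x =>
            mul_nonneg (Real.exp_pos _).le (mul_nonneg two_pos.le (inverse_moment_nonneg x))),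
          integral_const_mul, integral_const_mul, ← hC]
    _ ≤ ENNReal.ofReal (Real.exp (-s)) :=
        ENNReal.ofReal_le_ofReal (exp_neg_log_add_mul_self_le (mul_nonneg two_pos.le C_nonneg) s)

/-- Tail bound for the centered log-density-ratio statistic: for `β ∈ (0,1]` and
`C = E_{x,y∼π_base}[(π_base/π)^β]`, the probability (over `x ∼ μ` and `y,y'` i.i.d.
from `π_base(·|x)`) that the absolute difference of the regularized log-ratios exceeds
`log(2C) + s` is at most `e^{-s}`. -/
theorem log_ratio_tail_bound
    {X : Type} [MeasurableSpace X] (μ : Measure X) [IsProbabilityMeasure μ]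
    {Y : Type} [Fintype Y] [Nonempty Y]
    (pb : X → Y → ℝ) (hbpos : ∀ x y, 0 < pb x y) (hbsum : ∀ x, ∑ y, pb x y = 1)
    (hbmeas : ∀ y, Measurable fun x => pb x y)
    (pp : X → Y → ℝ) (hppos : ∀ x y, 0 < pp x y) (hpsum : ∀ x, ∑ y, pp x y = 1)
    (hpmeas : ∀ y, Measurable fun x => pp x y)
    (β : ℝ) (hβ : β ∈ Set.Ioc (0 : ℝ) 1)
    (C : ℝ)
    (hC : C = ∫ x, ∑ y, pb x y * (pb x y / pp x y) ^ β ∂μ)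
    (hCint : Integrable (fun x => ∑ y, pb x y * (pb x y / pp x y) ^ β) μ)
    (s : ℝ) (hs : 0 < s) :
    ∫⁻ x, ENNReal.ofReal (∑ y, ∑ y', pb x y * pb x y' *
        (if Real.log (2 * C) + s <
            |β * Real.log (pp x y / pb x y) - β * Real.log (pp x y' / pb x y')|
          then 1 else 0)) ∂μ
      ≤ ENNReal.ofReal (Real.exp (-s)) :=
  log_ratio_tail_bound_general μ pb hbpos (fun x => (hbsum x).le) pp hppos
    (fun x => (hpsum x).le) β (Set.Ioc_subset_Icc_self hβ) C hC hCint s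
end

section
/- Let X be a prompt set with probability distribution μ and Y a finite response set. Let π_base and π be conditional distributions with π_base(y|x) > 0 and π(y|x) > 0 for all x, y, let β ∈ (0,1], set C := E_{x∼μ, y∼π_base(·|x)}[(π_base(y|x)/π(y|x))^β], and suppose k := log(2C) ≥ 0. Define the random variable X̄ := |β·log(π(y|x)/π_base(y|x)) − β·log(π(y'|x)/π_base(y'|x))| where x ∼ μ and y, y' are i.i.d. from π_base(·|x). Then E[X̄^4] ≤ k^4 + 4(k^3 + 3k^2 + 6k + 6). -/
open MeasureTheory Finset
open scoped ENNReal Classical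

/-!
Let `r = π / π_base`. Since `exp |a - b| ≤ exp (a - b) + exp (b - a)` and `y`, `y'` are independent,
`E[exp X̄] ≤ 2 E[E[r ^ β | x] E[r ^ (-β) | x]] ≤ 2 C`: the first inner factor is at most one because
`r ^ β ≤ β r + (1 - β)`. Since `k = log (2 C)`, this says `E[exp X̄] ≤ exp k`. Instead of
integrating the resulting tail bound, expand `(k + s) ^ n` and use `s ^ j ≤ j! exp s` to bound
`X̄ ^ n` pointwise by `k ^ n` plus a multiple of `exp (X̄ - k)`. The outcome
`∑ j ≤ n, n.descFactorial j * k ^ (n - j)` is the `n`-th moment of `k` plus a standard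
exponential variable.
-/

open Real ProbabilityTheory Function

section ExponentialMoment

lemma choose_mul_pow_le_descFactorial_mul_exp {s : ℝ} (hs : 0 ≤ s) (n j : ℕ) :
    n.choose j * s ^ j ≤ n.descFactorial j * exp s := by
  have hpow : s ^ j ≤ j.factorial * exp s :=
    (div_le_iff₀' (by positivity)).1 (pow_div_factorial_le_exp s hs j)
  calc n.choose j * s ^ j ≤ n.choose j * (j.factorial * exp s) := by gcongr
    _ = n.descFactorial j * exp s := by
      rw [Nat.descFactorial_eq_factorial_mul_choose]
      push_cast
      ring

lemma pow_le_pow_add_sum_descFactorial_mul_exp_sub {k t : ℝ} (hk : 0 ≤ k) (ht : 0 ≤ t) (n : ℕ) :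
    t ^ n ≤ k ^ n +
      (∑ j ∈ range n, n.descFactorial (j + 1) * k ^ (n - (j + 1))) * exp (t - k) := by
  rcases le_total t k with htk | hkt
  · exact (pow_le_pow_left₀ ht htk n).trans (le_add_of_nonneg_right (by positivity))
  · have hs : 0 ≤ t - k := sub_nonneg.2 hkt
    calc t ^ n = ((t - k) + k) ^ n := by rw [sub_add_cancel]
      _ = k ^ n + ∑ j ∈ range n,
            n.choose (j + 1) * (t - k) ^ (j + 1) * k ^ (n - (j + 1)) := by
        rw [add_pow, sum_range_succ', add_comm]
        simp only [pow_zero, one_mul, tsub_zero, Nat.choose_zero_right, Nat.cast_one, mul_one]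
        congr! 2
        ring
      _ ≤ k ^ n + ∑ j ∈ range n,
            n.descFactorial (j + 1) * exp (t - k) * k ^ (n - (j + 1)) := by
        gcongr k ^ n + ∑ j ∈ range n, ?_ * k ^ (n - (j + 1))
        exact choose_mul_pow_le_descFactorial_mul_exp hs n _
      _ = _ := by simp only [sum_mul, mul_right_comm]

lemma lintegral_abs_pow_le_of_lintegral_exp_abs_le {Ω : Type*} [MeasurableSpace Ω]
    (P : Measure Ω) [IsProbabilityMeasure P] {T : Ω → ℝ} {k : ℝ}
    (hT : ∫⁻ ω, .ofReal (exp |T ω|) ∂P ≤ .ofReal (exp k)) (n : ℕ) :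
    ∫⁻ ω, .ofReal (|T ω| ^ n) ∂P ≤
      .ofReal (∑ j ∈ range (n + 1), n.descFactorial j * k ^ (n - j)) := by
  have hk : 0 ≤ k := by
    rw [← one_le_exp_iff, ← ENNReal.one_le_ofReal]
    calc (1 : ℝ≥0∞) = ∫⁻ _, 1 ∂P := by simp
      _ ≤ ∫⁻ ω, .ofReal (exp |T ω|) ∂P :=
        lintegral_mono fun ω => ENNReal.one_le_ofReal.2 (one_le_exp (abs_nonneg _))
      _ ≤ .ofReal (exp k) := hT
  set Q : ℝ := ∑ j ∈ range n, n.descFactorial (j + 1) * k ^ (n - (j + 1))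
  have hQ : 0 ≤ Q := by positivity
  calc ∫⁻ ω, .ofReal (|T ω| ^ n) ∂P
      ≤ ∫⁻ ω, (.ofReal (k ^ n) + .ofReal (Q * exp (-k)) * .ofReal (exp |T ω|)) ∂P := by
        refine lintegral_mono fun ω => ?_
        rw [← ENNReal.ofReal_mul (by positivity),
          ← ENNReal.ofReal_add (by positivity) (by positivity), mul_assoc, ← exp_add,
          neg_add_eq_sub]
        exact ENNReal.ofReal_le_ofReal
          (pow_le_pow_add_sum_descFactorial_mul_exp_sub hk (abs_nonneg _) n)
    _ = .ofReal (k ^ n) + .ofReal (Q * exp (-k)) * ∫⁻ ω, .ofReal (exp |T ω|) ∂P := by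
        rw [lintegral_add_left measurable_const, lintegral_const_mul' _ _ ENNReal.ofReal_ne_top,
          lintegral_const, measure_univ, mul_one]
    _ ≤ .ofReal (k ^ n) + .ofReal (Q * exp (-k)) * .ofReal (exp k) := by gcongr
    _ = .ofReal (∑ j ∈ range (n + 1), n.descFactorial j * k ^ (n - j)) := by
        rw [← ENNReal.ofReal_mul (by positivity), mul_assoc, ← exp_add, neg_add_cancel, exp_zero,
          mul_one, ← ENNReal.ofReal_add (by positivity) hQ, sum_range_succ', add_comm]
        simp only [Nat.descFactorial_zero, Nat.cast_one, one_mul, tsub_zero, Q]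

end ExponentialMoment

section LogRatio

variable {Y : Type*} [MeasurableSpace Y] (ν : Measure Y)

lemma lintegral_exp_abs_sub_le [SFinite ν] {f : Y → ℝ} (hf : AEMeasurable f ν) :
    ∫⁻ z, .ofReal (exp |f z.1 - f z.2|) ∂(ν.prod ν) ≤
      2 * ((∫⁻ y, .ofReal (exp (f y)) ∂ν) * ∫⁻ y, .ofReal (exp (-f y)) ∂ν) := by
  have hpos : AEMeasurable (fun y => ENNReal.ofReal (exp (f y))) ν := by fun_prop
  have hneg : AEMeasurable (fun y => ENNReal.ofReal (exp (-f y))) ν := by fun_prop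
  have hprod : AEMeasurable (fun z : Y × Y => ENNReal.ofReal (exp (f z.1)) *
      ENNReal.ofReal (exp (-f z.2))) (ν.prod ν) := hpos.comp_fst.mul hneg.comp_snd
  calc ∫⁻ z, .ofReal (exp |f z.1 - f z.2|) ∂(ν.prod ν)
      ≤ ∫⁻ z, (.ofReal (exp (f z.1)) * .ofReal (exp (-f z.2)) +
          .ofReal (exp (-f z.1)) * .ofReal (exp (f z.2))) ∂(ν.prod ν) := by
        refine lintegral_mono fun z => ?_
        rw [← ENNReal.ofReal_mul (exp_nonneg _), ← ENNReal.ofReal_mul (exp_nonneg _),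
          ← ENNReal.ofReal_add (by positivity) (by positivity), ← exp_add, ← exp_add]
        refine ENNReal.ofReal_le_ofReal ((exp_abs_le _).trans_eq ?_)
        ring_nf
    _ = 2 * ((∫⁻ y, .ofReal (exp (f y)) ∂ν) * ∫⁻ y, .ofReal (exp (-f y)) ∂ν) := by
        rw [lintegral_add_left' hprod, lintegral_prod_mul hpos hneg, lintegral_prod_mul hneg hpos]
        ring

lemma lintegral_ofReal_rpow_le_one [IsProbabilityMeasure ν] {r : Y → ℝ} (hr : ∀ y, 0 ≤ r y)
    (hint : ∫⁻ y, .ofReal (r y) ∂ν ≤ 1) {β : ℝ} (hβ : β ∈ Set.Icc 0 1) :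
    ∫⁻ y, .ofReal (r y ^ β) ∂ν ≤ 1 := by
  have hβ' : 0 ≤ 1 - β := sub_nonneg.2 hβ.2
  calc ∫⁻ y, .ofReal (r y ^ β) ∂ν
      ≤ ∫⁻ y, (.ofReal (1 - β) + .ofReal β * .ofReal (r y)) ∂ν := by
        refine lintegral_mono fun y => ?_
        rw [← ENNReal.ofReal_mul hβ.1, ← ENNReal.ofReal_add hβ' (mul_nonneg hβ.1 (hr y))]
        have hamgm := geom_mean_le_arith_mean2_weighted hβ' hβ.1 zero_le_one (hr y)
          (sub_add_cancel 1 β)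
        rw [one_rpow, one_mul, mul_one] at hamgm
        exact ENNReal.ofReal_le_ofReal hamgm
    _ = .ofReal (1 - β) + .ofReal β * ∫⁻ y, .ofReal (r y) ∂ν := by
        rw [lintegral_add_left measurable_const, lintegral_const_mul' _ _ ENNReal.ofReal_ne_top,
          lintegral_const, measure_univ, mul_one]
    _ ≤ .ofReal (1 - β) + .ofReal β * 1 := by gcongr
    _ = 1 := by rw [mul_one, ← ENNReal.ofReal_add hβ' hβ.1, sub_add_cancel, ENNReal.ofReal_one]

lemma lintegral_exp_abs_log_sub_log_le [IsProbabilityMeasure ν] {r : Y → ℝ}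
    (hr : ∀ y, 0 < r y) (hmeas : AEMeasurable r ν) (hint : ∫⁻ y, .ofReal (r y) ∂ν ≤ 1)
    {β : ℝ} (hβ : β ∈ Set.Icc 0 1) :
    ∫⁻ z, .ofReal (exp |β * log (r z.1) - β * log (r z.2)|) ∂(ν.prod ν) ≤
      2 * ∫⁻ y, .ofReal (r y ^ (-β)) ∂ν := by
  have hexp (γ : ℝ) (y : Y) : exp (γ * log (r y)) = r y ^ γ := by
    rw [rpow_def_of_pos (hr y), mul_comm]
  refine (lintegral_exp_abs_sub_le ν (hmeas.log.const_mul β)).trans ?_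
  simp only [← neg_mul, hexp]
  gcongr
  exact mul_le_of_le_one_left' (lintegral_ofReal_rpow_le_one ν (fun y => (hr y).le) hint hβ)

end LogRatio

theorem log_ratio_fourth_moment_general {X Y : Type*} [MeasurableSpace X] [MeasurableSpace Y]
    (μ : Measure X) [IsProbabilityMeasure μ] (κ : Kernel X Y) [IsMarkovKernel κ]
    {r : X → Y → ℝ} (hr : ∀ x y, 0 < r x y) (hmeas : Measurable (uncurry r))
    (hint : ∀ x, ∫⁻ y, .ofReal (r x y) ∂(κ x) ≤ 1) {β : ℝ} (hβ : β ∈ Set.Icc 0 1) {k : ℝ}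
    (hk : 2 * ∫⁻ x, ∫⁻ y, .ofReal (r x y ^ (-β)) ∂(κ x) ∂μ ≤ .ofReal (exp k)) (n : ℕ) :
    ∫⁻ x, ∫⁻ y, ∫⁻ y', .ofReal (|β * log (r x y) - β * log (r x y')| ^ n) ∂(κ x) ∂(κ x) ∂μ ≤
      .ofReal (∑ j ∈ range (n + 1), n.descFactorial j * k ^ (n - j)) := by
  set T : X × Y × Y → ℝ := fun p => β * log (r p.1 p.2.1) - β * log (r p.1 p.2.2)
  have hT : Measurable T := by
    have hfst : Measurable fun p : X × Y × Y => r p.1 p.2.1 :=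
      hmeas.comp (measurable_fst.prodMk measurable_snd.fst)
    have hsnd : Measurable fun p : X × Y × Y => r p.1 p.2.2 :=
      hmeas.comp (measurable_fst.prodMk measurable_snd.snd)
    exact (hfst.log.const_mul β).sub (hsnd.log.const_mul β)
  have hexp : ∫⁻ p, .ofReal (exp |T p|) ∂(μ ⊗ₘ (κ ×ₖ κ)) ≤ .ofReal (exp k) := by
    rw [Measure.lintegral_compProd (by fun_prop)]
    refine le_trans ?_ hk
    rw [← lintegral_const_mul' _ _ ENNReal.ofNat_ne_top]
    refine lintegral_mono fun x => ?_
    rw [Kernel.prod_apply]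
    exact lintegral_exp_abs_log_sub_log_le (κ x) (hr x) hmeas.of_uncurry_left.aemeasurable
      (hint x) hβ
  refine le_of_eq_of_le ?_ (lintegral_abs_pow_le_of_lintegral_exp_abs_le _ hexp n)
  rw [Measure.lintegral_compProd (by fun_prop)]
  refine lintegral_congr fun x => ?_
  rw [Kernel.lintegral_prod _ _ _ (by fun_prop)]

section WeightKernel

variable {X Y : Type*} [MeasurableSpace X] [MeasurableSpace Y] [Fintype Y]
  [MeasurableSingletonClass Y]

/-- The conditional distribution on a finite type whose mass function at `x` is `w x`. It is only
meaningful for measurable nonnegative weights: `Kernel.withDensity` is zero for a non-measurable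
density, and `ENNReal.ofReal` truncates negative weights. -/
noncomputable def weightKernel (w : X → Y → ℝ) : Kernel X Y :=
  (Kernel.const X Measure.count).withDensity fun x y => .ofReal (w x y)

variable {w : X → Y → ℝ}

lemma lintegral_weightKernel (hw : ∀ x y, 0 ≤ w x y) (hmeas : ∀ y, Measurable fun x => w x y)
    (x : X) {f : Y → ℝ} (hf : ∀ y, 0 ≤ f y) :
    ∫⁻ y, .ofReal (f y) ∂(weightKernel w x) = .ofReal (∑ y, w x y * f y) := by
  have hdensity : Measurable (uncurry fun x y => ENNReal.ofReal (w x y)) :=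
    measurable_from_prod_countable_left fun y => (hmeas y).ennreal_ofReal
  rw [weightKernel, Kernel.lintegral_withDensity _ hdensity _ (measurable_of_finite _),
    Kernel.const_apply, lintegral_count, tsum_fintype,
    ENNReal.ofReal_sum_of_nonneg fun y _ => mul_nonneg (hw x y) (hf y)]
  simp only [ENNReal.ofReal_mul (hw x _)]

lemma isMarkovKernel_weightKernel (hw : ∀ x y, 0 ≤ w x y) (hmeas : ∀ y, Measurable fun x => w x y)
    (hsum : ∀ x, ∑ y, w x y = 1) : IsMarkovKernel (weightKernel w) := by
  refine ⟨fun x => ⟨?_⟩⟩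
  simpa [hsum] using lintegral_weightKernel hw hmeas x (f := 1) fun _ => zero_le_one

lemma lintegral_weightKernel_weightKernel (hw : ∀ x y, 0 ≤ w x y)
    (hmeas : ∀ y, Measurable fun x => w x y) (x : X) {f : Y → Y → ℝ} (hf : ∀ y y', 0 ≤ f y y') :
    ∫⁻ y, ∫⁻ y', .ofReal (f y y') ∂(weightKernel w x) ∂(weightKernel w x) =
      .ofReal (∑ y, ∑ y', w x y * w x y' * f y y') := by
  simp only [lintegral_weightKernel hw hmeas x (hf _), mul_assoc, ← mul_sum]
  exact lintegral_weightKernel hw hmeas x fun y =>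
    sum_nonneg fun y' _ => mul_nonneg (hw x y') (hf y y')

lemma lintegral_lintegral_weightKernel (hw : ∀ x y, 0 ≤ w x y)
    (hmeas : ∀ y, Measurable fun x => w x y) {μ : Measure X} {f : X → Y → ℝ}
    (hf : ∀ x y, 0 ≤ f x y) (hint : Integrable (fun x => ∑ y, w x y * f x y) μ) :
    ∫⁻ x, ∫⁻ y, .ofReal (f x y) ∂(weightKernel w x) ∂μ =
      .ofReal (∫ x, ∑ y, w x y * f x y ∂μ) := by
  simp only [lintegral_weightKernel hw hmeas _ (hf _)]
  exact (ofReal_integral_eq_lintegral_ofReal hint <| ae_of_all _ fun x =>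
    sum_nonneg fun y _ => mul_nonneg (hw x y) (hf x y)).symm

end WeightKernel

/-- Fourth-moment bound for the centered log-density-ratio statistic: with
`k = log(2C) ≥ 0`, one has `E[X̄⁴] ≤ k⁴ + 4(k³ + 3k² + 6k + 6)`. -/
theorem log_ratio_fourth_moment
    {X : Type} [MeasurableSpace X] (μ : Measure X) [IsProbabilityMeasure μ]
    {Y : Type} [Fintype Y] [Nonempty Y]
    (pb : X → Y → ℝ) (hbpos : ∀ x y, 0 < pb x y) (hbsum : ∀ x, ∑ y, pb x y = 1)
    (hbmeas : ∀ y, Measurable fun x => pb x y)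
    (pp : X → Y → ℝ) (hppos : ∀ x y, 0 < pp x y) (hpsum : ∀ x, ∑ y, pp x y = 1)
    (hpmeas : ∀ y, Measurable fun x => pp x y)
    (β : ℝ) (hβ : β ∈ Set.Ioc (0 : ℝ) 1)
    (C : ℝ)
    (hC : C = ∫ x, ∑ y, pb x y * (pb x y / pp x y) ^ β ∂μ)
    (hCint : Integrable (fun x => ∑ y, pb x y * (pb x y / pp x y) ^ β) μ)
    (k : ℝ) (hk : k = Real.log (2 * C)) (hk0 : 0 ≤ k) :
    ∫⁻ x, ENNReal.ofReal (∑ y, ∑ y', pb x y * pb x y' *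
        |β * Real.log (pp x y / pb x y) - β * Real.log (pp x y' / pb x y')| ^ 4) ∂μ
      ≤ ENNReal.ofReal (k ^ 4 + 4 * (k ^ 3 + 3 * k ^ 2 + 6 * k + 6)) := by
  let _ : MeasurableSpace Y := ⊤
  have hb0 (x : X) (y : Y) : 0 ≤ pb x y := (hbpos x y).le
  have hr (x : X) (y : Y) : 0 < pp x y / pb x y := div_pos (hppos x y) (hbpos x y)
  have hmarkov := isMarkovKernel_weightKernel hb0 hbmeas hbsum
  have hmeas : Measurable (uncurry fun x y => pp x y / pb x y) :=
    measurable_from_prod_countable_left fun y => (hpmeas y).div (hbmeas y)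
  have hint (x : X) : ∫⁻ y, .ofReal (pp x y / pb x y) ∂(weightKernel pb x) ≤ 1 := by
    rw [lintegral_weightKernel hb0 hbmeas x fun y => (hr x y).le]
    simp only [mul_div_cancel₀ _ (hbpos x _).ne', hpsum, ENNReal.ofReal_one, le_rfl]
  have hcoeff : 2 * ∫⁻ x, ∫⁻ y, .ofReal ((pp x y / pb x y) ^ (-β)) ∂(weightKernel pb x) ∂μ ≤
      .ofReal (exp k) := by
    simp only [← inv_div (pp _ _), ← rpow_neg_eq_inv_rpow] at hC hCint
    rw [lintegral_lintegral_weightKernel hb0 hbmeas (fun x y => rpow_nonneg (hr x y).le _) hCint,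
      ← hC, hk, ← ENNReal.ofReal_ofNat 2, ← ENNReal.ofReal_mul zero_le_two]
    exact ENNReal.ofReal_le_ofReal (le_exp_log _)
  have hmoment := log_ratio_fourth_moment_general μ (weightKernel pb) hr hmeas hint
    (Set.Ioc_subset_Icc_self hβ) hcoeff 4
  refine le_of_eq_of_le (lintegral_congr fun x => ?_) (hmoment.trans_eq ?_)
  · exact (lintegral_weightKernel_weightKernel hb0 hbmeas x fun _ _ => by positivity).symm
  · norm_num [sum_range_succ, Nat.descFactorial]
    ring_nf
end

section
/- Let n ≥ 3 and consider the response space Y = [n]^2 (vocabulary [n], horizon 2). Define feature maps φ_1 : [n] → ℝ^2 and φ_2 : [n]^2 → ℝ^2 by φ_1(1) = φ_1(2) = e_1, φ_1(i) = e_2 for i ≥ 3, and φ_2(2,1) = e_1, φ_2(2,j) = e_2 for j ≠ 1, and φ_2(i,·) = 0 for i ≠ 2. For parameters θ = (θ_1, θ_2) ∈ ℝ^2 × ℝ^2 define the two-layer linear softmax model π_θ(y_1, y_2) := [exp(⟨φ_1(y_1), θ_1⟩)/Σ_{v∈[n]} exp(⟨φ_1(v), θ_1⟩)] · [exp(⟨φ_2(y_1,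 y_2), θ_2⟩)/Σ_{v∈[n]} exp(⟨φ_2(y_1, v), θ_2⟩)]. Let B := log n and θ* := (B·e_1, B·e_1). Then for all sufficiently large n: (i) (2,1) is the unique maximizer of (y_1,y_2) ↦ π_{θ*}(y_1,y_2) over [n]^2; and (ii) for every θ = (θ_1, θ_2) ∈ ℝ^2 × ℝ^2, π_θ(2,1) ≤ 1/2. In particular, no two-layer linear softmax model with these features (of any parameter norm) places probability greater than 1/2 on the sequence-level argmax of π_{θ*}. -/
open Finset

/-- Inner product on `ℝ × ℝ`. -/
noncomputable def ip2 (u v : ℝ × ℝ) : ℝ := u.1 * v.1 + u.2 * v.2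

/-- First-step feature map: tokens `1,2` (indices `0,1`) map to `e₁`, the rest to `e₂`. -/
noncomputable def phi1 (n : ℕ) (v : Fin n) : ℝ × ℝ := if (v : ℕ) < 2 then (1, 0) else (0, 1)

/-- Second-step feature map: `φ₂(2,1) = e₁`, `φ₂(2,j) = e₂` for `j ≠ 1`, and `φ₂(i,·) = 0`
for `i ≠ 2` (tokens `1,…,n` are represented by indices `0,…,n-1`). -/
noncomputable def phi2 (n : ℕ) (y1 y2 : Fin n) : ℝ × ℝ :=
  if (y1 : ℕ) = 1 then (if (y2 : ℕ) = 0 then (1, 0) else (0, 1)) else (0, 0)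

/-- Two-layer linear softmax model over `[n]²` with features `φ₁, φ₂`. -/
noncomputable def piSoftmax (n : ℕ) (θ : (ℝ × ℝ) × (ℝ × ℝ)) (y1 y2 : Fin n) : ℝ :=
  (Real.exp (ip2 (phi1 n y1) θ.1) / ∑ v, Real.exp (ip2 (phi1 n v) θ.1)) *
    (Real.exp (ip2 (phi2 n y1 y2) θ.2) / ∑ v, Real.exp (ip2 (phi2 n y1 v) θ.2))

/-!
Tokens `1` and `2` have the same first-step feature, so every model in the class gives them the
same first-step probability, which is therefore at most `1 / 2`. On the other hand, `(2, 1)`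
is the mode as soon as `θ₁` weakly and `θ₂` strictly prefers `e₁` to `e₂`: its first-step factor is
then maximal, and its second-step factor exceeds `1 / n`, which is the second-step factor after
any first token other than `2`.
-/

open Real

/-- The softmax distribution with logits `f`, that is, the probability vector proportional
to `exp ∘ f`; it is the common form of both factors of `piSoftmax`. -/
noncomputable def softmax {ι : Type*} [Fintype ι] (f : ι → ℝ) (i : ι) : ℝ :=
  exp (f i) / ∑ j, exp (f j)

section Softmax

variable {ι : Type*} [Fintype ι] {f : ι → ℝ} {i j : ι}

lemma sum_exp_pos (f : ι → ℝ) (i : ι) : 0 < ∑ j, exp (f j) :=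
  sum_pos (fun _ _ => exp_pos _) ⟨i, mem_univ i⟩

lemma softmax_pos (f : ι → ℝ) (i : ι) : 0 < softmax f i :=
  div_pos (exp_pos _) (sum_exp_pos f i)

lemma softmax_le_softmax_iff : softmax f i ≤ softmax f j ↔ f i ≤ f j :=
  (div_le_div_iff_of_pos_right (sum_exp_pos f i)).trans exp_le_exp

lemma softmax_lt_softmax_iff : softmax f i < softmax f j ↔ f i < f j :=
  (div_lt_div_iff_of_pos_right (sum_exp_pos f i)).trans exp_lt_exp

lemma softmax_const (c : ℝ) (i : ι) : softmax (fun _ => c) i = (Fintype.card ι : ℝ)⁻¹ := by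
  simp [softmax, div_mul_cancel_right₀ (exp_ne_zero c)]

lemma softmax_le_inv_card {s : Finset ι} (hs : s.Nonempty) (hle : ∀ j ∈ s, f i ≤ f j) :
    softmax f i ≤ (#s : ℝ)⁻¹ := by
  have hcard : (0 : ℝ) < #s := by exact_mod_cast hs.card_pos
  rw [softmax, div_le_iff₀ (sum_exp_pos f i), le_inv_mul_iff₀ hcard]
  calc #s * exp (f i) = #s • exp (f i) := (nsmul_eq_mul _ _).symm
    _ ≤ ∑ j ∈ s, exp (f j) := card_nsmul_le_sum _ _ _ fun j hj => exp_le_exp.2 (hle j hj)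
    _ ≤ ∑ j, exp (f j) := sum_le_univ_sum_of_nonneg fun _ => (exp_pos _).le

lemma softmax_le_one (f : ι → ℝ) (i : ι) : softmax f i ≤ 1 := by
  simpa using softmax_le_inv_card (singleton_nonempty i) (f := f) (i := i) (by simp)

lemma softmax_le_half (hij : i ≠ j) (hle : f i ≤ f j) : softmax f i ≤ 1 / 2 := by
  classical
  simpa [card_pair hij] using
    softmax_le_inv_card (insert_nonempty i {j}) (f := f) (i := i) (by simpa using hle)

lemma inv_card_lt_softmax (hmax : ∀ k, f k ≤ f i) (hlt : f j < f i) :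
    (Fintype.card ι : ℝ)⁻¹ < softmax f i := by
  have hcard : (0 : ℝ) < Fintype.card ι := by exact_mod_cast Fintype.card_pos_iff.2 ⟨i⟩
  rw [softmax, lt_div_iff₀ (sum_exp_pos f i), inv_mul_lt_iff₀ hcard]
  calc ∑ k, exp (f k) < ∑ _k : ι, exp (f i) :=
        sum_lt_sum (fun k _ => exp_le_exp.2 (hmax k)) ⟨j, mem_univ j, exp_lt_exp.2 hlt⟩
    _ = Fintype.card ι * exp (f i) := by rw [sum_const, card_univ, nsmul_eq_mul]

end Softmax

section Model

variable {n : ℕ}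

lemma piSoftmax_eq_softmax_mul_softmax (θ : (ℝ × ℝ) × (ℝ × ℝ)) (y₁ y₂ : Fin n) :
    piSoftmax n θ y₁ y₂ =
      softmax (fun v => ip2 (phi1 n v) θ.1) y₁ * softmax (fun v => ip2 (phi2 n y₁ v) θ.2) y₂ :=
  rfl

lemma ip2_phi1 (v : Fin n) (w : ℝ × ℝ) :
    ip2 (phi1 n v) w = if (v : ℕ) < 2 then w.1 else w.2 := by
  unfold phi1 ip2
  split_ifs <;> simp

lemma ip2_phi2 (y v : Fin n) (w : ℝ × ℝ) :
    ip2 (phi2 n y v) w =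
      if (y : ℕ) = 1 then (if (v : ℕ) = 0 then w.1 else w.2) else 0 := by
  unfold phi2 ip2
  split_ifs <;> simp

lemma ip2_phi1_le_ip2_phi1 {w : ℝ × ℝ} (hw : w.2 ≤ w.1) {a : Fin n} (ha : (a : ℕ) < 2)
    (y : Fin n) : ip2 (phi1 n y) w ≤ ip2 (phi1 n a) w := by
  rw [ip2_phi1, ip2_phi1, if_pos ha]
  split_ifs
  exacts [le_rfl, hw]

lemma inv_lt_softmax_phi2 {w : ℝ × ℝ} (hw : w.2 < w.1) {a b : Fin n} (ha : (a : ℕ) = 1)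
    (hb : (b : ℕ) = 0) : (n : ℝ)⁻¹ < softmax (fun v => ip2 (phi2 n a v) w) b := by
  have hmax (v : Fin n) : ip2 (phi2 n a v) w ≤ ip2 (phi2 n a b) w := by
    simp only [ip2_phi2, ha, hb, if_true]
    split_ifs
    exacts [le_rfl, hw.le]
  have hlt : ip2 (phi2 n a a) w < ip2 (phi2 n a b) w := by
    simpa [ip2_phi2, ha, hb] using hw
  simpa using inv_card_lt_softmax hmax hlt

lemma softmax_phi2_lt_softmax_phi2 {w : ℝ × ℝ} (hw : w.2 < w.1) {a b : Fin n}
    (ha : (a : ℕ) = 1) (hb : (b : ℕ) = 0) {y₁ y₂ : Fin n} (hy : (y₁, y₂) ≠ (a, b)) :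
    softmax (fun v => ip2 (phi2 n y₁ v) w) y₂ < softmax (fun v => ip2 (phi2 n a v) w) b := by
  by_cases hy₁ : (y₁ : ℕ) = 1
  · obtain rfl : y₁ = a := Fin.ext (hy₁.trans ha.symm)
    have hy₂ : (y₂ : ℕ) ≠ 0 := fun h => hy (congrArg _ (Fin.ext (h.trans hb.symm)))
    exact softmax_lt_softmax_iff.2 (by simpa [ip2_phi2, ha, hb, hy₂] using hw)
  · have huniform : softmax (fun v => ip2 (phi2 n y₁ v) w) y₂ = (n : ℝ)⁻¹ := by
      simp only [ip2_phi2, hy₁, if_false, softmax_const, Fintype.card_fin]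
    exact huniform.trans_lt (inv_lt_softmax_phi2 hw ha hb)

lemma piSoftmax_lt_piSoftmax {θ : (ℝ × ℝ) × (ℝ × ℝ)} (hθ₁ : θ.1.2 ≤ θ.1.1)
    (hθ₂ : θ.2.2 < θ.2.1) {a b : Fin n} (ha : (a : ℕ) = 1) (hb : (b : ℕ) = 0) {y₁ y₂ : Fin n}
    (hy : (y₁, y₂) ≠ (a, b)) : piSoftmax n θ y₁ y₂ < piSoftmax n θ a b := by
  simp only [piSoftmax_eq_softmax_mul_softmax]
  exact mul_lt_mul' (softmax_le_softmax_iff.2 (ip2_phi1_le_ip2_phi1 hθ₁ (by omega) y₁))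
    (softmax_phi2_lt_softmax_phi2 hθ₂ ha hb hy) (softmax_pos _ _).le (softmax_pos _ _)

lemma piSoftmax_le_half (θ : (ℝ × ℝ) × (ℝ × ℝ)) {a a' : Fin n} (haa' : a ≠ a')
    (hphi : phi1 n a = phi1 n a') (b : Fin n) : piSoftmax n θ a b ≤ 1 / 2 := by
  rw [piSoftmax_eq_softmax_mul_softmax]
  have hfirst : softmax (fun v => ip2 (phi1 n v) θ.1) a ≤ 1 / 2 :=
    softmax_le_half haa' (by rw [hphi])
  exact (mul_le_of_le_one_right (softmax_pos _ _).le (softmax_le_one _ _)).trans hfirst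

end Model

theorem softmax_representational_lower_bound_general {n : ℕ} (hn : 2 ≤ n)
    (θ : (ℝ × ℝ) × (ℝ × ℝ)) :
    (θ.1.2 ≤ θ.1.1 → θ.2.2 < θ.2.1 → ∀ y₁ y₂ : Fin n, (y₁, y₂) ≠ (⟨1, by omega⟩, ⟨0, by omega⟩) →
        piSoftmax n θ y₁ y₂ < piSoftmax n θ ⟨1, by omega⟩ ⟨0, by omega⟩) ∧
      piSoftmax n θ ⟨1, by omega⟩ ⟨0, by omega⟩ ≤ 1 / 2 :=
  ⟨fun hθ₁ hθ₂ _ _ hy => piSoftmax_lt_piSoftmax hθ₁ hθ₂ rfl rfl hy,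
    piSoftmax_le_half θ (a' := ⟨0, by omega⟩) (by simp) (by simp [phi1]) _⟩

/-- For sufficiently large `n`: with `B = log n` and `θ* = (B·e₁, B·e₁)`, the sequence
`(2,1)` is the unique maximizer of `π_{θ*}`, yet every two-layer linear softmax model with
these features places probability at most `1/2` on `(2,1)`. -/
theorem softmax_representational_lower_bound :
    ∃ n0 : ℕ, ∀ n : ℕ, ∀ _hn3 : 3 ≤ n, ∀ _hn0 : n0 ≤ n,
      (∀ y1 y2 : Fin n,
          (y1, y2) ≠ ((⟨1, by omega⟩ : Fin n), (⟨0, by omega⟩ : Fin n)) →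
          piSoftmax n ((Real.log n, 0), (Real.log n, 0)) y1 y2
            < piSoftmax n ((Real.log n, 0), (Real.log n, 0)) ⟨1, by omega⟩ ⟨0, by omega⟩)
      ∧
      (∀ θ : (ℝ × ℝ) × (ℝ × ℝ),
          piSoftmax n θ ⟨1, by omega⟩ ⟨0, by omega⟩ ≤ 1 / 2) := by
  refine ⟨0, fun n hn _ => ⟨?_, fun θ =>
    (softmax_representational_lower_bound_general (by omega) θ).2⟩⟩
  have hlog : 0 < log n := log_pos (by exact_mod_cast (by omega : 1 < n))
  exact (softmax_representational_lower_bound_general (by omega) _).1 hlog.le hlog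
end

section
/- There is an absolute constant c > 0 with the following property. Let X be a prompt set with probability distribution μ, Y a finite response set, d ∈ ℕ, φ : X × Y → ℝ^d a feature map with ‖φ(x,y)‖_2 ≤ 1, B ≥ 1, and let Π_{φ,B} := {π_θ : ‖θ‖_2 ≤ B} where π_θ(y|x) ∝ exp(⟨φ(x,y),θ⟩). Let r : X × Y → [−R_max, R_max] be a reward function, β > 0, T ∈ ℕ, and λ ≥ 4β²B² + R_max². Fix any reference model π* ∈ Π_{φ,B}, and for models π^{(1)},…,π^{(T)} ∈ Π_{φ,B} and each t, i ∈ [T] write g_t(x,y,y') := β·log(π^{(t)}(y|x)/π*(y|x)) − r(x,y) − β·log(π^{(t)}(y'|x)/π*(y'|x)) + r(x,y'), and let E^{(i)} denote expectation over x ∼ μ, y ∼ π^{(i)}(·|x), y' ∼ π*(·|x). Then for every choice of π^{(1)},…,π^{(T)} ∈ Π_{φ,B}: Σ_{t=1}^T (E^{(t)}[g_t(x,y,y')])² / (max(λ, Σ_{i=1}^{t-1} E^{(i)}[g_t(x,y,y')²])) ≤ c·d·log(T+1). In other words, the Sequential Extrapolation Coefficient SEC(Π_{φ,B}, r, T, β,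 λ; π*) is at most c·d·log(T+1). -/
open MeasureTheory Finset
open scoped RealInnerProductSpace

/-!
The normalizing constants of the softmax models cancel in the difference over `y` and `y'`, so with
one extra coordinate for the reward gap, `g_t = ⟪Ψ, w_t⟫` for features `Ψ (x, y, y')` in dimension
`d + 1` that do not depend on `t`. After rescaling, `‖w_t‖² ≤ 8` and `‖Ψ‖² ≤ 4β²B² + R² ≤ λ`. By
Jensen, replacing `Ψ` by its mean `u_i` under the `i`-th law preserves the numerators and decreases
the denominators. What remains is a deterministic sum, bounded by Cauchy–Schwarz in the metric of
`λ • 1 + ∑_{i < t} u_i u_iᵀ` and the elliptical potential argument: the logarithm of the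
determinant of this matrix telescopes, and AM-GM on the eigenvalues bounds its final value by the
trace.

The resulting factor `d + 1` is at most `2 d` unless `d = 0`; then all parameters coincide and the
errors have mean zero because they are antisymmetric in `(y, y')`.
-/

lemma min_one_le_log_one_add {x : ℝ} (hx : 0 ≤ x) : min 1 x ≤ 3 / 2 * Real.log (1 + x) := by
  have hmin : min 1 x ≤ 3 / 2 * (2 * x / (x + 2)) := by
    rw [← mul_div_assoc, le_div_iff₀ (by positivity)]
    rcases le_total 1 x with h | h
    · rw [min_eq_left h]; linarith
    · rw [min_eq_right h]; nlinarith
  linarith [Real.le_log_one_add_of_nonneg hx]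

lemma sq_integral_le_integral_sq {Ω : Type*} [MeasurableSpace Ω] {P : Measure Ω}
    [IsProbabilityMeasure P] {f : Ω → ℝ} (hf : MemLp f 2 P) :
    (∫ ω, f ω ∂P) ^ 2 ≤ ∫ ω, f ω ^ 2 ∂P := by
  have h := ProbabilityTheory.variance_nonneg f P
  rw [ProbabilityTheory.variance_eq_sub hf] at h
  exact sub_nonneg.1 h

lemma sum_sum_mul_mul_eq_zero_of_antisymm {ι : Type*} [Fintype ι] (p : ι → ℝ) {f : ι → ι → ℝ}
    (hf : ∀ i j, f j i = -f i j) : ∑ i, ∑ j, p i * p j * f i j = 0 := by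
  rw [← self_eq_neg]
  conv_lhs => rw [sum_comm]
  simp only [← sum_neg_distrib]
  refine sum_congr rfl fun i _ => sum_congr rfl fun j _ => ?_
  rw [hf, mul_comm (p j), mul_neg]

section EllipticalPotential

open Matrix

variable {ι τ : Type*} [DecidableEq ι] {lam : ℝ}

/-- The regularized Gram matrix `λ • 1 + ∑ i ∈ s, uᵢ uᵢᵀ` of the elliptical potential argument. -/
def regGram (lam : ℝ) (u : τ → ι → ℝ) (s : Finset τ) : Matrix ι ι ℝ :=
  lam • 1 + ∑ i ∈ s, vecMulVec (u i) (u i)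

lemma posDef_regGram [Finite ι] (hlam : 0 < lam) (u : τ → ι → ℝ) (s : Finset τ) :
    (regGram lam u s).PosDef :=
  (PosDef.one.smul hlam).add_posSemidef <| posSemidef_sum s fun i _ => by
    simpa only [star_trivial] using posSemidef_vecMulVec_self_star (u i)

variable [Fintype ι]

lemma det_add_vecMulVec {R : Type*} [CommRing R] {A : Matrix ι ι R} (hA : IsUnit A.det)
    (u v : ι → R) : (A + vecMulVec u v).det = A.det * (1 + v ⬝ᵥ A⁻¹ *ᵥ u) := by
  rw [vecMulVec_eq Unit, det_add_replicateCol_mul_replicateRow hA, det_unique (n := Unit),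
    Matrix.add_apply, Matrix.one_apply_eq, Matrix.mul_assoc, ← replicateCol_mulVec,
    replicateRow_mul_replicateCol_apply]

lemma sq_dotProduct_le_of_posDef {M : Matrix ι ι ℝ} (hM : M.PosDef) (v w : ι → ℝ) :
    (v ⬝ᵥ w) ^ 2 ≤ (v ⬝ᵥ M⁻¹ *ᵥ v) * (w ⬝ᵥ M *ᵥ w) := by
  have hnonneg : ∀ z, 0 ≤ M.toBilin' z z := fun z => by
    simpa only [toBilin'_apply', star_trivial] using hM.posSemidef.dotProduct_mulVec_nonneg z
  have hsymm : ∀ x y, x ⬝ᵥ M *ᵥ y = M *ᵥ x ⬝ᵥ y := fun x y => by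
    rw [dotProduct_mulVec, ← mulVec_transpose, show Mᵀ = M from hM.isHermitian]
  have hinv : M *ᵥ M⁻¹ *ᵥ v = v := by
    rw [mulVec_mulVec, mul_nonsing_inv _ hM.det_pos.ne'.isUnit, one_mulVec]
  have h := M.toBilin'.apply_sq_le_of_symm hnonneg
    ⟨fun x y => by simp only [toBilin'_apply', hsymm x, dotProduct_comm _ y, RingHom.id_apply]⟩
    (M⁻¹ *ᵥ v) w
  rwa [toBilin'_apply', toBilin'_apply', toBilin'_apply', hsymm, hinv, dotProduct_comm _ v] at h

lemma log_det_le_of_posDef {M : Matrix ι ι ℝ} (hM : M.PosDef) :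
    Real.log M.det ≤ Fintype.card ι * Real.log (M.trace / Fintype.card ι) := by
  rcases isEmpty_or_nonempty ι with _ | _
  · simp
  have hn : (0 : ℝ) < Fintype.card ι := by exact_mod_cast Fintype.card_pos
  have hjensen := strictConcaveOn_log_Ioi.concaveOn.le_map_sum (t := univ)
    (w := fun _ : ι => (Fintype.card ι : ℝ)⁻¹) (p := hM.isHermitian.eigenvalues)
    (fun _ _ => by positivity) (by simp) (fun i _ => hM.eigenvalues_pos i)
  have hdet : M.det = ∏ i, hM.isHermitian.eigenvalues i :=
    hM.isHermitian.det_eq_prod_eigenvalues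
  have htrace : M.trace = ∑ i, hM.isHermitian.eigenvalues i :=
    hM.isHermitian.trace_eq_sum_eigenvalues
  simp only [smul_eq_mul, ← mul_sum] at hjensen
  rw [hdet, Real.log_prod fun i _ => (hM.eigenvalues_pos i).ne', htrace, div_eq_inv_mul]
  exact (inv_mul_le_iff₀ hn).1 hjensen

lemma dotProduct_regGram_mulVec (lam : ℝ) (u : τ → ι → ℝ) (s : Finset τ) (w : ι → ℝ) :
    w ⬝ᵥ regGram lam u s *ᵥ w = lam * (w ⬝ᵥ w) + ∑ i ∈ s, (u i ⬝ᵥ w) ^ 2 := by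
  rw [regGram, add_mulVec, smul_mulVec, one_mulVec, dotProduct_add, dotProduct_smul, smul_eq_mul,
    sum_mulVec, dotProduct_sum]
  congr 1
  refine sum_congr rfl fun i _ => ?_
  rw [vecMulVec_mulVec, op_smul_eq_smul, dotProduct_smul, smul_eq_mul, dotProduct_comm w, sq]

lemma trace_regGram (lam : ℝ) (u : τ → ι → ℝ) (s : Finset τ) :
    (regGram lam u s).trace = lam * Fintype.card ι + ∑ i ∈ s, u i ⬝ᵥ u i := by
  simp only [regGram, trace_add, trace_smul, trace_one, trace_sum, trace_vecMulVec, smul_eq_mul]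

lemma dotProduct_regGram_inv_nonneg (hlam : 0 < lam) (u : τ → ι → ℝ) (s : Finset τ) (v : ι → ℝ) :
    0 ≤ v ⬝ᵥ (regGram lam u s)⁻¹ *ᵥ v := by
  simpa only [star_trivial] using
    (posDef_regGram hlam u s).posSemidef.inv.dotProduct_mulVec_nonneg v

lemma sq_dotProduct_div_max_le (hlam : 0 < lam) (u : τ → ι → ℝ) (s : Finset τ) {v w : ι → ℝ}
    {W : ℝ} (hv : v ⬝ᵥ v ≤ lam) (hw : w ⬝ᵥ w ≤ W) :
    (v ⬝ᵥ w) ^ 2 / max lam (∑ i ∈ s, (u i ⬝ᵥ w) ^ 2)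
      ≤ (1 + W) * min 1 (v ⬝ᵥ (regGram lam u s)⁻¹ *ᵥ v) := by
  set m := max lam (∑ i ∈ s, (u i ⬝ᵥ w) ^ 2)
  have hlam_le : lam ≤ m := le_max_left _ _
  have hm : 0 < m := hlam.trans_le hlam_le
  have hx := dotProduct_regGram_inv_nonneg hlam u s v
  have hww : 0 ≤ w ⬝ᵥ w := by simpa only [star_trivial] using dotProduct_self_star_nonneg w
  have hW : 0 ≤ W := hww.trans hw
  rw [mul_min_of_nonneg _ _ (by positivity), div_le_iff₀ hm, min_mul_of_nonneg _ _ hm.le,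
    le_min_iff]
  constructor
  · calc (v ⬝ᵥ w) ^ 2 ≤ (v ⬝ᵥ v) * (w ⬝ᵥ w) := by
          simpa only [dotProduct, sq] using sum_mul_sq_le_sq_mul_sq univ v w
      _ ≤ m * (1 + W) := by gcongr <;> linarith
      _ = (1 + W) * 1 * m := by ring
  · calc (v ⬝ᵥ w) ^ 2
        ≤ (v ⬝ᵥ (regGram lam u s)⁻¹ *ᵥ v) * (lam * (w ⬝ᵥ w) + ∑ i ∈ s, (u i ⬝ᵥ w) ^ 2) := by
          rw [← dotProduct_regGram_mulVec]
          exact sq_dotProduct_le_of_posDef (posDef_regGram hlam u s) v w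
      _ ≤ (v ⬝ᵥ (regGram lam u s)⁻¹ *ᵥ v) * (m * W + m) := by
          gcongr
          exact le_max_right _ _
      _ = (1 + W) * (v ⬝ᵥ (regGram lam u s)⁻¹ *ᵥ v) * m := by ring

variable [LinearOrder τ]

lemma log_det_regGram (hlam : 0 < lam) (u : τ → ι → ℝ) (s : Finset τ) :
    Real.log (regGram lam u s).det = Fintype.card ι * Real.log lam
      + ∑ t ∈ s, Real.log (1 + u t ⬝ᵥ (regGram lam u {i ∈ s | i < t})⁻¹ *ᵥ u t) := by
  induction s using Finset.induction_on_max with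
  | empty => simp [regGram]
  | insert a s hs ih =>
    have ha : a ∉ s := fun h => (hs a h).false
    have hlast : {i ∈ insert a s | i < a} = s := by
      rw [filter_insert, if_neg (lt_irrefl a), filter_true_of_mem hs]
    have hinit : ∀ t ∈ s, {i ∈ insert a s | i < t} = {i ∈ s | i < t} := fun t ht => by
      rw [filter_insert, if_neg (hs t ht).not_gt]
    have hsucc : regGram lam u (insert a s) = regGram lam u s + vecMulVec (u a) (u a) := by
      rw [regGram, regGram, sum_insert ha, add_comm (vecMulVec _ _), add_assoc]
    have hdet := (posDef_regGram hlam u s).det_pos.ne'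
    have hx := dotProduct_regGram_inv_nonneg hlam u s (u a)
    rw [sum_insert ha, hlast, sum_congr rfl fun t ht => by rw [hinit t ht], hsucc,
      det_add_vecMulVec hdet.isUnit, Real.log_mul hdet (by positivity), ih]
    ring

lemma sum_log_one_add_regGram_le (hlam : 0 < lam) {u : τ → ι → ℝ} {s : Finset τ}
    (hu : ∀ t ∈ s, u t ⬝ᵥ u t ≤ lam) :
    ∑ t ∈ s, Real.log (1 + u t ⬝ᵥ (regGram lam u {i ∈ s | i < t})⁻¹ *ᵥ u t)
      ≤ Fintype.card ι * Real.log (1 + #s / Fintype.card ι) := by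
  rcases isEmpty_or_nonempty ι with _ | _
  · simp
  have hn : (0 : ℝ) < Fintype.card ι := by exact_mod_cast Fintype.card_pos
  have hM := posDef_regGram hlam u s
  have htrace : (regGram lam u s).trace / Fintype.card ι ≤ lam * (1 + #s / Fintype.card ι) := by
    have hsum : ∑ i ∈ s, u i ⬝ᵥ u i ≤ #s * lam := by
      simpa only [nsmul_eq_mul] using sum_le_card_nsmul s _ lam hu
    rw [div_le_iff₀ hn, trace_regGram]
    calc lam * Fintype.card ι + ∑ i ∈ s, u i ⬝ᵥ u i ≤ lam * Fintype.card ι + #s * lam := by gcongr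
      _ = lam * (1 + #s / Fintype.card ι) * Fintype.card ι := by field_simp
  have hlogdet : Real.log (regGram lam u s).det
      ≤ Fintype.card ι * (Real.log lam + Real.log (1 + #s / Fintype.card ι)) := by
    rw [← Real.log_mul hlam.ne' (by positivity)]
    refine (log_det_le_of_posDef hM).trans ?_
    gcongr
    exact div_pos hM.trace_pos hn
  rw [log_det_regGram hlam] at hlogdet
  linarith

end EllipticalPotential

section SequentialExtrapolation

open Module

variable {V τ : Type*} [NormedAddCommGroup V] [InnerProductSpace ℝ V] [FiniteDimensional ℝ V]
  [LinearOrder τ] {lam W : ℝ} {s : Finset τ}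

lemma sum_sq_inner_div_le (hlam : 0 < lam) {u w : τ → V}
    (hu : ∀ t ∈ s, ‖u t‖ ^ 2 ≤ lam) (hw : ∀ t ∈ s, ‖w t‖ ^ 2 ≤ W) :
    ∑ t ∈ s, ⟪u t, w t⟫ ^ 2 / max lam (∑ i ∈ s with i < t, ⟪u i, w t⟫ ^ 2)
      ≤ 3 / 2 * (1 + W) * (finrank ℝ V * Real.log (1 + #s / finrank ℝ V)) := by
  rcases s.eq_empty_or_nonempty with rfl | ⟨t₀, ht₀⟩
  · simp
  have hW : 0 ≤ W := (sq_nonneg _).trans (hw t₀ ht₀)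
  let b := stdOrthonormalBasis ℝ V
  let coords : V → Fin (finrank ℝ V) → ℝ := fun v => b.repr v
  have hinner : ∀ v v' : V, ⟪v, v'⟫ = coords v ⬝ᵥ coords v' := fun v v' => by
    rw [← b.repr.inner_map_map, EuclideanSpace.inner_eq_star_dotProduct, star_trivial,
      dotProduct_comm]
  have hnorm : ∀ v : V, ‖v‖ ^ 2 = coords v ⬝ᵥ coords v := fun v => by
    rw [← real_inner_self_eq_norm_sq, hinner]
  simp only [hinner, hnorm] at *
  have hlog := sum_log_one_add_regGram_le hlam hu
  rw [Fintype.card_fin] at hlog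
  refine le_trans (sum_le_sum fun t ht => ?_)
    ((mul_sum s _ _).symm.trans_le (mul_le_mul_of_nonneg_left hlog (by positivity)))
  refine (sq_dotProduct_div_max_le hlam (fun i => coords (u i)) _ (hu t ht) (hw t ht)).trans ?_
  rw [mul_comm (3 / 2 : ℝ), mul_assoc]
  gcongr
  exact min_one_le_log_one_add (dotProduct_regGram_inv_nonneg hlam _ _ _)

lemma sum_sq_integral_inner_div_le {Ω : Type*} [MeasurableSpace Ω] (hlam : 0 < lam)
    (P : τ → Measure Ω) [∀ t, IsProbabilityMeasure (P t)] {Ψ : Ω → V} (hΨm : StronglyMeasurable Ψ)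
    (hΨ : ∀ ω, ‖Ψ ω‖ ^ 2 ≤ lam) {w : τ → V} (hw : ∀ t ∈ s, ‖w t‖ ^ 2 ≤ W) :
    ∑ t ∈ s, (∫ ω, ⟪Ψ ω, w t⟫ ∂P t) ^ 2
        / max lam (∑ i ∈ s with i < t, ∫ ω, ⟪Ψ ω, w t⟫ ^ 2 ∂P i)
      ≤ 3 / 2 * (1 + W) * (finrank ℝ V * Real.log (1 + #s / finrank ℝ V)) := by
  have hΨ' : ∀ ω, ‖Ψ ω‖ ≤ √lam := fun ω => Real.le_sqrt_of_sq_le (hΨ ω)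
  have hL2 : ∀ i, MemLp Ψ 2 (P i) := fun i =>
    .of_bound hΨm.aestronglyMeasurable _ (ae_of_all _ hΨ')
  have hmean : ∀ i v, ∫ ω, ⟪Ψ ω, v⟫ ∂P i = ⟪∫ ω, Ψ ω ∂P i, v⟫ := fun i v => by
    simp only [real_inner_comm v]
    exact integral_inner ((hL2 i).integrable one_le_two) v
  have hu : ∀ i, ‖∫ ω, Ψ ω ∂P i‖ ^ 2 ≤ lam := fun i => by
    have h := norm_integral_le_of_norm_le_const (μ := P i) (ae_of_all _ hΨ')
    rw [probReal_univ, mul_one] at h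
    exact (Real.le_sqrt (norm_nonneg _) hlam.le).1 h
  refine le_trans ?_ (sum_sq_inner_div_le hlam (fun t _ => hu t) hw)
  simp only [hmean]
  gcongr with t _ i _
  rw [← hmean]
  exact sq_integral_le_integral_sq ((hL2 i).inner_const (w t))

end SequentialExtrapolation

section WeightedLaw

variable {X Z E : Type*} [MeasurableSpace X] [MeasurableSpace Z] [Fintype Z]
  [DiscreteMeasurableSpace Z] {μ : Measure X} {q : X → Z → ℝ}

/-- The measure on `X × Z` under which `x` is drawn from `μ` and then `z` has weight `q x z`; it is
a probability measure when each `q x` is a probability vector. -/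
noncomputable def weightedLaw (μ : Measure X) (q : X → Z → ℝ) : Measure (X × Z) :=
  (μ.prod Measure.count).withDensity fun p => ENNReal.ofReal (q p.1 p.2)

lemma isProbabilityMeasure_weightedLaw [IsProbabilityMeasure μ]
    (hqm : ∀ z, Measurable fun x => q x z) (hq0 : ∀ x z, 0 ≤ q x z) (hq1 : ∀ x, ∑ z, q x z = 1) :
    IsProbabilityMeasure (weightedLaw μ q) := by
  have hqm' : Measurable fun p : X × Z => q p.1 p.2 := measurable_from_prod_countable_left hqm
  constructor
  rw [weightedLaw, withDensity_apply _ .univ, Measure.restrict_univ,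
    lintegral_prod _ hqm'.ennreal_ofReal.aemeasurable]
  simp only [lintegral_count, tsum_fintype, ← ENNReal.ofReal_sum_of_nonneg fun z _ => hq0 _ z, hq1,
    ENNReal.ofReal_one, lintegral_const, measure_univ, one_mul]

lemma integral_weightedLaw [SFinite μ]
    (hqm : ∀ z, Measurable fun x => q x z) (hq0 : ∀ x z, 0 ≤ q x z) {f : X × Z → ℝ}
    (hf : Integrable f (weightedLaw μ q)) :
    ∫ p, f p ∂weightedLaw μ q = ∫ x, ∑ z, q x z * f (x, z) ∂μ := by
  have hqm' : Measurable fun p : X × Z => ENNReal.ofReal (q p.1 p.2) :=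
    (measurable_from_prod_countable_left hqm).ennreal_ofReal
  have hfin : ∀ᵐ p ∂μ.prod Measure.count, ENNReal.ofReal (q p.1 p.2) < ⊤ :=
    ae_of_all _ fun _ => ENNReal.ofReal_lt_top
  rw [weightedLaw, integrable_withDensity_iff_integrable_smul' hqm' hfin] at hf
  rw [weightedLaw, integral_withDensity_eq_integral_toReal_smul hqm' hfin, integral_prod _ hf]
  simp only [integral_count, ENNReal.toReal_ofReal (hq0 _ _), smul_eq_mul]

end WeightedLaw

section Softmax

variable {Y V : Type*} [Fintype Y] [NormedAddCommGroup V] [InnerProductSpace ℝ V]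

/-- The linear softmax model `π_θ(y) ∝ exp ⟪φ y, θ⟫`, with `φ` the feature map at a fixed prompt. -/
noncomputable def linearSoftmax (φ : Y → V) (θ : V) (y : Y) : ℝ :=
  Real.exp ⟪φ y, θ⟫ / ∑ y', Real.exp ⟪φ y', θ⟫

lemma measurable_linearSoftmax {X : Type*} [MeasurableSpace X] {φ : X → Y → V}
    (hφm : ∀ y, StronglyMeasurable fun x => φ x y) (θ : V) (y : Y) :
    Measurable fun x => linearSoftmax (φ x) θ y := by
  have hexp : ∀ y, Measurable fun x => Real.exp ⟪φ x y, θ⟫ := fun y =>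
    ((hφm y).inner stronglyMeasurable_const).measurable.exp
  exact (hexp y).div (Finset.measurable_fun_sum _ fun y' _ => hexp y')

variable [Nonempty Y]

lemma sum_exp_inner_pos (φ : Y → V) (θ : V) : 0 < ∑ y, Real.exp ⟪φ y, θ⟫ :=
  sum_pos (fun _ _ => Real.exp_pos _) univ_nonempty

lemma linearSoftmax_pos (φ : Y → V) (θ : V) (y : Y) : 0 < linearSoftmax φ θ y :=
  div_pos (Real.exp_pos _) (sum_exp_inner_pos φ θ)

lemma sum_linearSoftmax (φ : Y → V) (θ : V) : ∑ y, linearSoftmax φ θ y = 1 := by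
  simp only [linearSoftmax, ← sum_div]
  exact div_self (sum_exp_inner_pos φ θ).ne'

lemma log_linearSoftmax (φ : Y → V) (θ : V) (y : Y) :
    Real.log (linearSoftmax φ θ y) = ⟪φ y, θ⟫ - Real.log (∑ y', Real.exp ⟪φ y', θ⟫) := by
  rw [linearSoftmax, Real.log_div (Real.exp_ne_zero _) (sum_exp_inner_pos φ θ).ne', Real.log_exp]

lemma log_linearSoftmax_div (φ : Y → V) (θ θ' : V) (y : Y) :
    Real.log (linearSoftmax φ θ y / linearSoftmax φ θ' y) = ⟪φ y, θ - θ'⟫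
      - (Real.log (∑ y', Real.exp ⟪φ y', θ⟫) - Real.log (∑ y', Real.exp ⟪φ y', θ'⟫)) := by
  rw [Real.log_div (linearSoftmax_pos φ θ y).ne' (linearSoftmax_pos φ θ' y).ne',
    log_linearSoftmax, log_linearSoftmax, inner_sub_right]
  ring

end Softmax

section RewardError

variable {X Y V : Type*} [NormedAddCommGroup V] [InnerProductSpace ℝ V]

/-- The features in which the error `g_θ(x, y, y')` is linear, the reward gap being an extra
coordinate. They are scaled so that the threshold `4β²B² + R²` of the theorem bounds their squared
norm. -/
noncomputable def errorFeature (β B : ℝ) (φ : X → Y → V) (r : X → Y → ℝ) (p : X × Y × Y) :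
    WithLp 2 (V × ℝ) :=
  .toLp 2 ((β * B) • (φ p.1 p.2.1 - φ p.1 p.2.2), (r p.1 p.2.1 - r p.1 p.2.2) / 2)

/-- The coefficients of `g_θ` with respect to `errorFeature`, where `δ = θ - θstar`. -/
noncomputable def errorCoeff (B : ℝ) (δ : V) : WithLp 2 (V × ℝ) := .toLp 2 (B⁻¹ • δ, -2)

lemma norm_sq_errorFeature_le {β B R : ℝ} {φ : X → Y → V} {r : X → Y → ℝ}
    (hφ : ∀ x y, ‖φ x y‖ ≤ 1) (hr : ∀ x y, |r x y| ≤ R) (p : X × Y × Y) :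
    ‖errorFeature β B φ r p‖ ^ 2 ≤ 4 * β ^ 2 * B ^ 2 + R ^ 2 := by
  obtain ⟨x, y, y'⟩ := p
  have hφdiff : ‖φ x y - φ x y'‖ ≤ 2 := (norm_sub_le _ _).trans (by linarith [hφ x y, hφ x y'])
  have hrdiff : |(r x y - r x y') / 2| ≤ R := by
    rw [abs_div, abs_two, div_le_iff₀ two_pos]
    exact (abs_sub _ _).trans (by linarith [hr x y, hr x y'])
  calc ‖errorFeature β B φ r (x, y, y')‖ ^ 2
      = (β * B) ^ 2 * ‖φ x y - φ x y'‖ ^ 2 + |(r x y - r x y') / 2| ^ 2 := by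
        simp only [errorFeature, WithLp.prod_norm_sq_eq_of_L2, WithLp.toLp_fst, WithLp.toLp_snd,
          norm_smul, mul_pow, Real.norm_eq_abs, sq_abs]
    _ ≤ (β * B) ^ 2 * 2 ^ 2 + R ^ 2 := by gcongr
    _ = 4 * β ^ 2 * B ^ 2 + R ^ 2 := by ring

lemma norm_sq_errorCoeff_le {B : ℝ} {δ : V} (hδ : ‖δ‖ ≤ 2 * B) : ‖errorCoeff B δ‖ ^ 2 ≤ 8 := by
  have hscaled : ‖B⁻¹ • δ‖ ≤ 2 := by
    have hB : 0 ≤ B := by linarith [norm_nonneg δ]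
    rw [norm_smul, norm_inv, Real.norm_of_nonneg hB, ← div_eq_inv_mul]
    exact div_le_of_le_mul₀ hB zero_le_two hδ
  calc ‖errorCoeff B δ‖ ^ 2 = ‖B⁻¹ • δ‖ ^ 2 + ‖(-2 : ℝ)‖ ^ 2 := by
        rw [errorCoeff, WithLp.prod_norm_sq_eq_of_L2, WithLp.toLp_fst, WithLp.toLp_snd]
    _ ≤ 2 ^ 2 + ‖(-2 : ℝ)‖ ^ 2 := by gcongr
    _ = 8 := by norm_num

lemma stronglyMeasurable_errorFeature [MeasurableSpace X] [MeasurableSpace Y]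
    [DiscreteMeasurableSpace Y] [Countable Y] [SecondCountableTopology V] {β B : ℝ}
    {φ : X → Y → V} {r : X → Y → ℝ} (hφm : ∀ y, StronglyMeasurable fun x => φ x y)
    (hrm : ∀ y, Measurable fun x => r x y) : StronglyMeasurable (errorFeature β B φ r) := by
  borelize V
  have hφ : Measurable fun p : X × Y => φ p.1 p.2 :=
    measurable_from_prod_countable_left fun y => (hφm y).measurable
  have hr : Measurable fun p : X × Y => r p.1 p.2 := measurable_from_prod_countable_left hrm
  have hfst : Measurable fun p : X × Y × Y => (p.1, p.2.1) := by fun_prop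
  have hsnd : Measurable fun p : X × Y × Y => (p.1, p.2.2) := by fun_prop
  refine (WithLp.prod_continuous_toLp 2 V ℝ).comp_stronglyMeasurable (.prodMk ?_ ?_)
  · exact (((hφ.comp hfst).sub (hφ.comp hsnd)).const_smul (β * B)).stronglyMeasurable
  · exact (((hr.comp hfst).sub (hr.comp hsnd)).div_const 2).stronglyMeasurable

variable [Fintype Y]

/-- The error `g_θ(x, y, y')`: the amount by which the gap between `y` and `y'` of the implicit
reward `β log (π_θ / π_θstar)` exceeds the gap of the true reward `r`. -/
noncomputable def rewardGapError (β : ℝ) (φ : X → Y → V) (r : X → Y → ℝ) (θstar θ : V)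
    (x : X) (y y' : Y) : ℝ :=
  β * Real.log (linearSoftmax (φ x) θ y / linearSoftmax (φ x) θstar y) - r x y
    - β * Real.log (linearSoftmax (φ x) θ y' / linearSoftmax (φ x) θstar y') + r x y'

/-- The expectation of `f x y y'` over `x ∼ μ`, `y ∼ π_θ(·|x)` and `y' ∼ π_θstar(·|x)`. -/
noncomputable def pairExpectation [MeasurableSpace X] (μ : Measure X) (φ : X → Y → V) (θ θstar : V)
    (f : X → Y → Y → ℝ) : ℝ :=
  ∫ x, ∑ y, ∑ y', linearSoftmax (φ x) θ y * linearSoftmax (φ x) θstar y' * f x y y' ∂μ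

/-- The law of `(x, y, y')` when `x ∼ μ`, `y ∼ π_θ(·|x)` and `y' ∼ π_θstar(·|x)`, as a measure on
`X × Y × Y`; integrals against it are the `pairExpectation`s. -/
noncomputable def pairLaw [MeasurableSpace X] [MeasurableSpace Y] (μ : Measure X) (φ : X → Y → V)
    (θ θstar : V) : Measure (X × Y × Y) :=
  weightedLaw μ fun x z => linearSoftmax (φ x) θ z.1 * linearSoftmax (φ x) θstar z.2

lemma pairExpectation_rewardGapError_self [MeasurableSpace X] (μ : Measure X) (β : ℝ)
    (φ : X → Y → V) (r : X → Y → ℝ) (θ : V) :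
    pairExpectation μ φ θ θ (rewardGapError β φ r θ θ) = 0 := by
  have hanti : ∀ x y y', rewardGapError β φ r θ θ x y' y = -rewardGapError β φ r θ θ x y y' :=
    fun x y y' => by simp only [rewardGapError]; ring
  exact integral_eq_zero_of_ae <| ae_of_all _ fun x =>
    sum_sum_mul_mul_eq_zero_of_antisymm (linearSoftmax (φ x) θ) (hanti x)

variable [Nonempty Y]

lemma rewardGapError_eq_inner {B : ℝ} (hB : B ≠ 0) (β : ℝ) (φ : X → Y → V) (r : X → Y → ℝ)
    (θstar θ : V) (x : X) (y y' : Y) :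
    rewardGapError β φ r θstar θ x y y'
      = ⟪errorFeature β B φ r (x, y, y'), errorCoeff B (θ - θstar)⟫ := by
  simp only [rewardGapError, errorFeature, errorCoeff, log_linearSoftmax_div,
    WithLp.prod_inner_apply, real_inner_smul_left, real_inner_smul_right, inner_sub_left (φ x y),
    Real.inner_apply]
  field_simp
  ring

section PairLaw

variable [MeasurableSpace X] [MeasurableSpace Y] [DiscreteMeasurableSpace Y] {μ : Measure X}
  {φ : X → Y → V}

lemma isProbabilityMeasure_pairLaw [IsProbabilityMeasure μ]
    (hφm : ∀ y, StronglyMeasurable fun x => φ x y) (θ θstar : V) :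
    IsProbabilityMeasure (pairLaw μ φ θ θstar) := by
  refine isProbabilityMeasure_weightedLaw
    (fun z => (measurable_linearSoftmax hφm θ z.1).mul (measurable_linearSoftmax hφm θstar z.2))
    (fun x z => mul_nonneg (linearSoftmax_pos _ _ _).le (linearSoftmax_pos _ _ _).le) fun x => ?_
  rw [Fintype.sum_prod_type, ← Fintype.sum_mul_sum, sum_linearSoftmax, sum_linearSoftmax, one_mul]

lemma pairExpectation_eq_integral [SFinite μ] (hφm : ∀ y, StronglyMeasurable fun x => φ x y)
    {θ θstar : V} {f : X → Y → Y → ℝ} {F : X × Y × Y → ℝ} (hfF : ∀ x y y', f x y y' = F (x, y, y'))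
    (hF : Integrable F (pairLaw μ φ θ θstar)) :
    pairExpectation μ φ θ θstar f = ∫ p, F p ∂pairLaw μ φ θ θstar := by
  rw [pairLaw] at hF ⊢
  rw [integral_weightedLaw ?_ ?_ hF]
  · simp only [pairExpectation, hfF, Fintype.sum_prod_type]
  · exact fun z =>
      (measurable_linearSoftmax hφm θ z.1).mul (measurable_linearSoftmax hφm θstar z.2)
  · exact fun x z => mul_nonneg (linearSoftmax_pos _ _ _).le (linearSoftmax_pos _ _ _).le

end PairLaw

lemma sum_sq_pairExpectation_rewardGapError_div_le [MeasurableSpace X] {μ : Measure X}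
    [IsProbabilityMeasure μ] [FiniteDimensional ℝ V] {φ : X → Y → V}
    (hφ : ∀ x y, ‖φ x y‖ ≤ 1) (hφm : ∀ y, StronglyMeasurable fun x => φ x y) {r : X → Y → ℝ}
    {R : ℝ} (hr : ∀ x y, |r x y| ≤ R) (hrm : ∀ y, Measurable fun x => r x y) {β B lam : ℝ}
    (hB : B ≠ 0) (hlam0 : 0 < lam) (hlam : 4 * β ^ 2 * B ^ 2 + R ^ 2 ≤ lam) {θstar : V}
    (hθstar : ‖θstar‖ ≤ B) {T : ℕ} {θ : Fin T → V} (hθ : ∀ t, ‖θ t‖ ≤ B) :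
    ∑ t, pairExpectation μ φ (θ t) θstar (rewardGapError β φ r θstar (θ t)) ^ 2
        / max lam (∑ i ∈ Iio t, pairExpectation μ φ (θ i) θstar fun x y y' =>
            rewardGapError β φ r θstar (θ t) x y y' ^ 2)
      ≤ 27 / 2 * ((Module.finrank ℝ V + 1) * Real.log (1 + T / (Module.finrank ℝ V + 1))) := by
  let _ : MeasurableSpace Y := ⊤
  have : DiscreteMeasurableSpace Y := ⟨fun _ => trivial⟩
  have : ∀ i, IsProbabilityMeasure (pairLaw μ φ (θ i) θstar) := fun i =>
    isProbabilityMeasure_pairLaw hφm (θ i) θstar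
  let Ψ := errorFeature β B φ r
  let w := fun t => errorCoeff B (θ t - θstar)
  have hΨm : StronglyMeasurable Ψ := stronglyMeasurable_errorFeature hφm hrm
  have hΨ : ∀ p, ‖Ψ p‖ ^ 2 ≤ lam := fun p => (norm_sq_errorFeature_le hφ hr p).trans hlam
  have hw : ∀ t ∈ univ, ‖w t‖ ^ 2 ≤ 8 := fun t _ =>
    norm_sq_errorCoeff_le ((norm_sub_le _ _).trans (by linarith [hθ t]))
  have hL2 : ∀ i t, MemLp (fun p => ⟪Ψ p, w t⟫) 2 (pairLaw μ φ (θ i) θstar) := fun i t =>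
    (MemLp.of_bound hΨm.aestronglyMeasurable √lam
      (ae_of_all _ fun p => Real.le_sqrt_of_sq_le (hΨ p))).inner_const (w t)
  have hg : ∀ t x y y', rewardGapError β φ r θstar (θ t) x y y' = ⟪Ψ (x, y, y'), w t⟫ :=
    fun t => rewardGapError_eq_inner hB β φ r θstar (θ t)
  have hmean : ∀ t, pairExpectation μ φ (θ t) θstar (rewardGapError β φ r θstar (θ t))
      = ∫ p, ⟪Ψ p, w t⟫ ∂pairLaw μ φ (θ t) θstar := fun t =>
    pairExpectation_eq_integral hφm (hg t) ((hL2 t t).integrable one_le_two)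
  have hsq : ∀ i t, (pairExpectation μ φ (θ i) θstar fun x y y' =>
      rewardGapError β φ r θstar (θ t) x y y' ^ 2)
      = ∫ p, ⟪Ψ p, w t⟫ ^ 2 ∂pairLaw μ φ (θ i) θstar := fun i t =>
    pairExpectation_eq_integral hφm (fun x y y' => by rw [hg]) (hL2 i t).integrable_sq
  have hrank : Module.finrank ℝ (WithLp 2 (V × ℝ)) = Module.finrank ℝ V + 1 := by
    rw [(WithLp.linearEquiv 2 ℝ (V × ℝ)).finrank_eq, Module.finrank_prod, Module.finrank_self]
  have h := sum_sq_integral_inner_div_le hlam0 (fun t => pairLaw μ φ (θ t) θstar) hΨm hΨ hw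
  simp only [filter_gt_eq_Iio, card_univ, Fintype.card_fin, hrank, Nat.cast_add, Nat.cast_one] at h
  rw [show (3 / 2 * (1 + 8) : ℝ) = 27 / 2 by norm_num] at h
  simpa only [hmean, hsq] using h

end RewardError

theorem sec_linear_softmax_bound_general {X Y V : Type*} [MeasurableSpace X] {μ : Measure X}
    [IsProbabilityMeasure μ] [Fintype Y] [Nonempty Y] [NormedAddCommGroup V]
    [InnerProductSpace ℝ V] [FiniteDimensional ℝ V] {φ : X → Y → V} (hφ : ∀ x y, ‖φ x y‖ ≤ 1)
    (hφm : ∀ y, StronglyMeasurable fun x => φ x y) {r : X → Y → ℝ} {R : ℝ}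
    (hr : ∀ x y, |r x y| ≤ R) (hrm : ∀ y, Measurable fun x => r x y) {β B lam : ℝ}
    (hlam0 : 0 < lam) (hlam : 4 * β ^ 2 * B ^ 2 + R ^ 2 ≤ lam) {θstar : V} (hθstar : ‖θstar‖ ≤ B)
    {T : ℕ} {θ : Fin T → V} (hθ : ∀ t, ‖θ t‖ ≤ B) :
    ∑ t, pairExpectation μ φ (θ t) θstar (rewardGapError β φ r θstar (θ t)) ^ 2
        / max lam (∑ i ∈ Iio t, pairExpectation μ φ (θ i) θstar fun x y y' =>
            rewardGapError β φ r θstar (θ t) x y y' ^ 2)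
      ≤ 27 * Module.finrank ℝ V * Real.log (T + 1) := by
  by_cases hconst : ∀ t, θ t = θstar
  · have hlog : 0 ≤ Real.log (T + 1) := Real.log_nonneg (by simp)
    simp only [hconst, pairExpectation_rewardGapError_self, zero_pow two_ne_zero, zero_div,
      sum_const_zero]
    positivity
  obtain ⟨t₀, ht₀⟩ := not_forall.1 hconst
  have hB : B ≠ 0 := by
    rintro rfl
    exact ht₀ ((norm_le_zero_iff.1 (hθ t₀)).trans (norm_le_zero_iff.1 hθstar).symm)
  have : Nontrivial V := ⟨_, _, ht₀⟩
  have hdim : (1 : ℝ) ≤ Module.finrank ℝ V := by exact_mod_cast Module.finrank_pos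
  have hdiv : (T : ℝ) / (Module.finrank ℝ V + 1) ≤ T := div_le_self T.cast_nonneg (by linarith)
  have hlog : 0 ≤ Real.log (1 + T / (Module.finrank ℝ V + 1)) :=
    Real.log_nonneg (le_add_of_nonneg_right (by positivity))
  calc _ ≤ 27 / 2 * ((Module.finrank ℝ V + 1) * Real.log (1 + T / (Module.finrank ℝ V + 1))) :=
        sum_sq_pairExpectation_rewardGapError_div_le hφ hφm hr hrm hB hlam0 hlam hθstar hθ
    _ ≤ 27 / 2 * (2 * Module.finrank ℝ V * Real.log (T + 1)) := by
        rw [add_comm (T : ℝ)]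
        gcongr
        linarith
    _ = 27 * Module.finrank ℝ V * Real.log (T + 1) := by ring

/-- The Sequential Extrapolation Coefficient of the linear softmax class `Π_{φ,B}`
(with reward `r`, horizon `T`, regularization `β`, threshold `λ ≥ 4β²B² + R²_max`,
and reference model `π* ∈ Π_{φ,B}`) is at most `c·d·log(T+1)` for an absolute
constant `c > 0`. -/
theorem sec_linear_softmax_bound :
    ∃ c : ℝ, 0 < c ∧
      ∀ (X : Type) [MeasurableSpace X] (μ : Measure X) [IsProbabilityMeasure μ]
        (Y : Type) [Fintype Y] [Nonempty Y]
        (d : ℕ) (φ : X → Y → EuclideanSpace ℝ (Fin d)),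
        (∀ x y, ‖φ x y‖ ≤ 1) →
        (∀ y, Measurable fun x => φ x y) →
        ∀ B : ℝ, 1 ≤ B →
        ∀ (r : X → Y → ℝ) (Rmax : ℝ), (∀ x y, |r x y| ≤ Rmax) →
        (∀ y, Measurable fun x => r x y) →
        ∀ β : ℝ, 0 < β →
        ∀ (T : ℕ) (lam : ℝ), 4 * β ^ 2 * B ^ 2 + Rmax ^ 2 ≤ lam →
        ∀ θstar : EuclideanSpace ℝ (Fin d), ‖θstar‖ ≤ B →
        ∀ θ : Fin T → EuclideanSpace ℝ (Fin d), (∀ t, ‖θ t‖ ≤ B) →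
        let pi : EuclideanSpace ℝ (Fin d) → X → Y → ℝ := fun θv x y =>
          Real.exp ⟪φ x y, θv⟫ / ∑ y', Real.exp ⟪φ x y', θv⟫
        let g : Fin T → X → Y → Y → ℝ := fun t x y y' =>
          β * Real.log (pi (θ t) x y / pi θstar x y) - r x y
            - β * Real.log (pi (θ t) x y' / pi θstar x y') + r x y'
        let E : (X → Y → ℝ) → (X → Y → Y → ℝ) → ℝ := fun w f =>
          ∫ x, ∑ y, ∑ y', w x y * pi θstar x y' * f x y y' ∂μ
        ∑ t : Fin T, (E (pi (θ t)) (g t)) ^ 2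
            / max lam (∑ i ∈ Finset.Iio t, E (pi (θ i)) fun x y y' => (g t x y y') ^ 2)
          ≤ c * d * Real.log (T + 1) := by
  refine ⟨27, by norm_num, fun X _ μ _ Y _ _ d φ hφ hφm B hB r Rmax hr hrm β hβ T lam hlam θstar
    hθstar θ hθ => ?_⟩
  simpa only [finrank_euclideanSpace_fin, pairExpectation, rewardGapError, linearSoftmax] using
    sec_linear_softmax_bound_general (μ := μ) hφ (fun y => (hφm y).stronglyMeasurable) hr hrm
      (lt_of_lt_of_le (by positivity) hlam) hlam hθstar hθ
end

section
/- Let X be a prompt set with probability distribution μ, Y a finite response set, and π_base a conditional distribution with π_base(y|x) > 0 for all x, y. Let y*(x) := argmax_{y∈Y} π_base(y|x) denote the set of maximizers, and suppose the margin condition holds with parameter γ > 0: for μ-almost every x and every y' ∉ y*(x), max_{y∈Y} π_base(y|x) ≥ (1+γ)·π_base(y'|x). Define the comparator model π*(y|x) := π_base(y|x)·1{y ∈ y*(x)}/π_base(y*(x)|x). Then for every model π̂ and every δ ∈ (0,1): E_{x∼μ} E_{y∼π*(·|x), y'∼π̂(·|x)}[log π_base(y|x) − log π_base(y'|x)] ≥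 log(1+γ)·δ·P_{x∼μ}[π̂(y*(x)|x) ≤ 1−δ]. -/
open MeasureTheory Finset
open scoped ENNReal Classical

/-! Averaging against a distribution supported on the maximizers of `p` replaces `log (p y)` by
`log (max p)`, so the gap equals the mean under `q` of the log-deficit `log (max p) - log (p y')`.
This deficit is nonnegative, and by the margin condition it is at least `log (1 + γ)` off the
maximizers; hence the gap is at least `log (1 + γ)` times the mass that `q` puts off the maximizers,
and Markov's inequality for this mass gives the tail bound. -/

section Maximizers

variable {Y α : Type*} [Fintype Y] [LinearOrder α]

/-- The argmax set `y*` of a function on a finite type. -/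
def maximizers (p : Y → α) : Finset Y :=
  univ.filter fun y => ∀ z, p z ≤ p y

theorem mem_maximizers {p : Y → α} {y : Y} : y ∈ maximizers p ↔ ∀ z, p z ≤ p y := by
  simp [maximizers]

theorem maximizers_nonempty [Nonempty Y] (p : Y → α) : (maximizers p).Nonempty := by
  obtain ⟨m, hm⟩ := Finite.exists_max p
  exact ⟨m, mem_maximizers.2 hm⟩

theorem sup'_univ_eq_of_mem_maximizers [Nonempty Y] {p : Y → α} {y : Y} (hy : y ∈ maximizers p) :
    univ.sup' univ_nonempty p = p y :=
  le_antisymm (sup'_le _ _ fun z _ => mem_maximizers.1 hy z) (le_sup' p (mem_univ y))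

variable {X : Type*} [MeasurableSpace X]
  [TopologicalSpace α] [MeasurableSpace α] [OpensMeasurableSpace α] [OrderClosedTopology α]
  [SecondCountableTopology α]

theorem measurableSet_mem_maximizers {p : X → Y → α} (hp : ∀ y, Measurable fun x => p x y) (y : Y) :
    MeasurableSet {x | y ∈ maximizers (p x)} := by
  simp only [mem_maximizers, Set.ofPred_forall]
  exact MeasurableSet.iInter fun z => measurableSet_le (hp z) (hp y)

theorem measurable_sum_maximizers {M : Type*} [AddCommMonoid M] [MeasurableSpace M]
    [MeasurableAdd₂ M] {p : X → Y → α} {q : X → Y → M} (hp : ∀ y, Measurable fun x => p x y)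
    (hq : ∀ y, Measurable fun x => q x y) :
    Measurable fun x => ∑ y ∈ maximizers (p x), q x y := by
  have hite (x : X) : ∑ y ∈ maximizers (p x), q x y =
      ∑ y, if y ∈ maximizers (p x) then q x y else 0 := by
    rw [sum_ite_mem, univ_inter]
  simp only [hite]
  exact Finset.measurable_sum _ fun y _ =>
    (hq y).ite (measurableSet_mem_maximizers hp y) measurable_const

end Maximizers

section LogGap

variable {Y : Type*} [Fintype Y]

/-- The weights `p` conditioned on their argmax set: the comparator `π*(·|x)` when
`p = π_base(·|x)`. -/
noncomputable def condMaximizers (p : Y → ℝ) (y : Y) : ℝ :=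
  (if ∀ z, p z ≤ p y then p y else 0) / ∑ u ∈ maximizers p, p u

/-- The expected log-likelihood gap `E[log p(y) - log p(y')]` for independent `y ∼ r`, `y' ∼ q`. -/
noncomputable def expectedLogGap (p r q : Y → ℝ) : ℝ :=
  ∑ y, ∑ y', r y * q y' * (Real.log (p y) - Real.log (p y'))

/-- The log-likelihood lost by the response `y` against a maximizer of `p`. -/
noncomputable def logDeficit [Nonempty Y] (p : Y → ℝ) (y : Y) : ℝ :=
  Real.log (univ.sup' univ_nonempty p) - Real.log (p y)

theorem condMaximizers_eq_zero {p : Y → ℝ} {y : Y} (hy : y ∉ maximizers p) :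
    condMaximizers p y = 0 := by
  rw [condMaximizers, if_neg (mt mem_maximizers.2 hy), zero_div]

variable [Nonempty Y]

theorem sum_condMaximizers {p : Y → ℝ} (hp : ∀ y, 0 < p y) : ∑ y, condMaximizers p y = 1 := by
  have hZ : 0 < ∑ u ∈ maximizers p, p u := sum_pos (fun u _ => hp u) (maximizers_nonempty p)
  simp only [condMaximizers]
  rw [← sum_div, ← sum_filter]
  exact div_self hZ.ne'

theorem logDeficit_nonneg {p : Y → ℝ} {y : Y} (hy : 0 < p y) : 0 ≤ logDeficit p y :=
  sub_nonneg.2 (Real.log_le_log hy (le_sup' p (mem_univ y)))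

theorem log_le_logDeficit {p : Y → ℝ} {y : Y} {c : ℝ} (hc : 0 < c) (hy : 0 < p y)
    (hmargin : c * p y ≤ univ.sup' univ_nonempty p) : Real.log c ≤ logDeficit p y := by
  rw [logDeficit, le_sub_iff_add_le, ← Real.log_mul hc.ne' hy.ne']
  exact Real.log_le_log (mul_pos hc hy) hmargin

theorem expectedLogGap_eq_sum_mul_logDeficit {p r : Y → ℝ} (hr : ∀ y ∉ maximizers p, r y = 0)
    (hrsum : ∑ y, r y = 1) (q : Y → ℝ) :
    expectedLogGap p r q = ∑ y, q y * logDeficit p y := by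
  have hterm (y y' : Y) :
      r y * q y' * (Real.log (p y) - Real.log (p y')) = r y * (q y' * logDeficit p y') := by
    by_cases hy : y ∈ maximizers p
    · rw [logDeficit, sup'_univ_eq_of_mem_maximizers hy, mul_assoc]
    · simp only [hr y hy, zero_mul]
  calc expectedLogGap p r q
      = ∑ y, ∑ y', r y * (q y' * logDeficit p y') := by simp only [expectedLogGap, hterm]
    _ = (∑ y, r y) * ∑ y', q y' * logDeficit p y' := (sum_mul_sum ..).symm
    _ = ∑ y', q y' * logDeficit p y' := by rw [hrsum, one_mul]

theorem log_mul_sum_compl_maximizers_le {p q : Y → ℝ} (hp : ∀ y, 0 < p y) (hq : ∀ y, 0 ≤ q y)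
    {c : ℝ} (hc : 0 < c)
    (hmargin : ∀ y ∉ maximizers p, c * p y ≤ univ.sup' univ_nonempty p) :
    Real.log c * ∑ y ∈ (maximizers p)ᶜ, q y ≤ ∑ y, q y * logDeficit p y := by
  calc Real.log c * ∑ y ∈ (maximizers p)ᶜ, q y
      = ∑ y ∈ (maximizers p)ᶜ, q y * Real.log c := by rw [mul_comm, sum_mul]
    _ ≤ ∑ y ∈ (maximizers p)ᶜ, q y * logDeficit p y := sum_le_sum fun y hy =>
        mul_le_mul_of_nonneg_left (log_le_logDeficit hc (hp y) (hmargin y (mem_compl.1 hy))) (hq y)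
    _ ≤ ∑ y, q y * logDeficit p y := sum_le_univ_sum_of_nonneg fun y =>
        mul_nonneg (hq y) (logDeficit_nonneg (hp y))

theorem log_mul_one_sub_sum_maximizers_le_expectedLogGap {p q : Y → ℝ} (hp : ∀ y, 0 < p y)
    (hq : ∀ y, 0 ≤ q y) (hqsum : ∑ y, q y = 1) {c : ℝ} (hc : 0 < c)
    (hmargin : ∀ y ∉ maximizers p, c * p y ≤ univ.sup' univ_nonempty p) :
    Real.log c * (1 - ∑ y ∈ maximizers p, q y) ≤ expectedLogGap p (condMaximizers p) q := by
  have hcompl : 1 - ∑ y ∈ maximizers p, q y = ∑ y ∈ (maximizers p)ᶜ, q y := by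
    rw [← hqsum, ← sum_compl_add_sum (maximizers p), add_sub_cancel_right]
  rw [hcompl, expectedLogGap_eq_sum_mul_logDeficit (fun _ => condMaximizers_eq_zero)
    (sum_condMaximizers hp)]
  exact log_mul_sum_compl_maximizers_le hp hq hc hmargin

end LogGap

theorem margin_log_gap_lower_bound_general
    {X : Type*} [MeasurableSpace X] (μ : Measure X) {Y : Type*} [Fintype Y] [Nonempty Y]
    {pb : X → Y → ℝ} (hpos : ∀ x y, 0 < pb x y) (hmeas : ∀ y, Measurable fun x => pb x y)
    {γ : ℝ} (hγ : 0 < γ)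
    (hmargin : ∀ᵐ x ∂μ, ∀ y' ∉ maximizers (pb x),
      (1 + γ) * pb x y' ≤ univ.sup' univ_nonempty (pb x))
    {phat : X → Y → ℝ} (hhpos : ∀ x y, 0 ≤ phat x y) (hhsum : ∀ x, ∑ y, phat x y = 1)
    (hhmeas : ∀ y, Measurable fun x => phat x y) (δ : ℝ) :
    ENNReal.ofReal (Real.log (1 + γ) * δ) * μ {x | ∑ y ∈ maximizers (pb x), phat x y ≤ 1 - δ}
      ≤ ∫⁻ x, ENNReal.ofReal
          (expectedLogGap (pb x) (condMaximizers (pb x)) (phat x)) ∂μ := by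
  let bound (x : X) : ℝ := Real.log (1 + γ) * (1 - ∑ y ∈ maximizers (pb x), phat x y)
  have hbound : Measurable fun x => ENNReal.ofReal (bound x) :=
    (((measurable_sum_maximizers hmeas hhmeas).const_sub 1).const_mul _).ennreal_ofReal
  have hlog : 0 ≤ Real.log (1 + γ) := Real.log_nonneg (by linarith)
  calc ENNReal.ofReal (Real.log (1 + γ) * δ) * μ {x | ∑ y ∈ maximizers (pb x), phat x y ≤ 1 - δ}
      ≤ ENNReal.ofReal (Real.log (1 + γ) * δ) *
          μ {x | ENNReal.ofReal (Real.log (1 + γ) * δ) ≤ ENNReal.ofReal (bound x)} := by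
        gcongr with x
        exact fun hx => ENNReal.ofReal_le_ofReal
          (mul_le_mul_of_nonneg_left (le_sub_comm.1 hx) hlog)
    _ ≤ ∫⁻ x, ENNReal.ofReal (bound x) ∂μ := mul_meas_ge_le_lintegral hbound _
    _ ≤ _ := lintegral_mono_ae <| hmargin.mono fun x hx => ENNReal.ofReal_le_ofReal <|
        log_mul_one_sub_sum_maximizers_le_expectedLogGap (hpos x) (hhpos x) (hhsum x)
          (by linarith) hx

/-- Under the margin condition with parameter `γ`, the expected log-likelihood gap
between the conditioned comparator `π*` (i.e. `π_base` conditioned on its argmax set)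
and any model `π̂` is at least `log(1+γ)·δ·P[π̂(y*(x)|x) ≤ 1-δ]`. -/
theorem margin_log_gap_lower_bound
    {X : Type} [MeasurableSpace X] (μ : Measure X) [IsProbabilityMeasure μ]
    {Y : Type} [Fintype Y] [Nonempty Y]
    (pb : X → Y → ℝ) (hpos : ∀ x y, 0 < pb x y) (hsum : ∀ x, ∑ y, pb x y = 1)
    (hmeas : ∀ y, Measurable fun x => pb x y)
    (γ : ℝ) (hγ : 0 < γ)
    (hmargin : ∀ᵐ x ∂μ, ∀ y' : Y, ¬ (∀ z, pb x z ≤ pb x y') →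
        (1 + γ) * pb x y' ≤ univ.sup' univ_nonempty (pb x))
    (phat : X → Y → ℝ) (hhpos : ∀ x y, 0 ≤ phat x y) (hhsum : ∀ x, ∑ y, phat x y = 1)
    (hhmeas : ∀ y, Measurable fun x => phat x y)
    (δ : ℝ) (hδ : δ ∈ Set.Ioo (0 : ℝ) 1) :
    ENNReal.ofReal (Real.log (1 + γ) * δ) *
        μ {x | ∑ y ∈ univ.filter (fun y => ∀ z, pb x z ≤ pb x y), phat x y ≤ 1 - δ}
      ≤ ∫⁻ x, ENNReal.ofReal (∑ y, ∑ y',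
          ((if ∀ z, pb x z ≤ pb x y then pb x y else 0) /
              ∑ u ∈ univ.filter (fun u => ∀ z, pb x z ≤ pb x u), pb x u) * phat x y' *
            (Real.log (pb x y) - Real.log (pb x y'))) ∂μ := by
  exact margin_log_gap_lower_bound_general μ hpos hmeas hγ
    (hmargin.mono fun _ hx y' hy' => hx y' (mt mem_maximizers.2 hy')) hhpos hhsum hhmeas δ
end
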